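/- There exists a universal constant α ∈ (0, 1/2) with the following property. Let K > 0 and let s satisfy (1 − α)/2 < s ≤ 1/2. Then there exist T* > 0, C > 0 and c > 0, depending only on K and s, such that for every ε₁ ∈ (0, 1] and every classical solution θ of the regularized fractional Burgers equation with viscosity ε₁ on ℝ × (0, ∞) satisfying ‖θ(·,t)‖_{L²(ℝ)} ≤ K for all t > 0 and θ(x,t) → 0 as x → ±∞ for each t > 0, one has |θ(x,t) − θ(y,t)| ≤ C|x − y|^α for all t > T* and all x, y ∈ ℝ with |x − y| > c ε₁^{2−2s}. -/

import Mathlib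

open MeasureTheory Real Set Filter

/-- The normalizing constant of the 1-D fractional Laplacian. -/
noncomputable def fracC (s : ℝ) : ℝ :=
  (4 : ℝ) ^ s * Real.Gamma (1 / 2 + s) / (Real.sqrt Real.pi * |Real.Gamma (-s)|)

/-- The fractional Laplacian `(-Δ)^s u (x)`. -/
noncomputable def fracLap (s : ℝ) (u : ℝ → ℝ) (x : ℝ) : ℝ :=
  fracC s * ∫ y : ℝ, (u x - u y) / |x - y| ^ (1 + 2 * s)

/-- A classical solution of the regularized fractional Burgers equation
`θ_t + θ θ_x + (-Δ)^s θ - ε₁ θ_xx = 0` on a set `D ⊆ ℝ × ℝ` (points written `(x, t)`):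
a bounded continuous function, continuously differentiable in `t` and twice continuously
differentiable in `x`, satisfying the equation at every point of `D`, where the fractional
Laplacian (acting in `x`) is given by an absolutely convergent integral. -/
structure IsClassicalSolution (s ε₁ : ℝ) (θ : ℝ → ℝ → ℝ) (D : Set (ℝ × ℝ)) : Prop where
  bounded : ∃ B : ℝ, ∀ p ∈ D, |θ p.1 p.2| ≤ B
  cont : ContinuousOn (fun p : ℝ × ℝ => θ p.1 p.2) D
  diff_t : ∀ p ∈ D, DifferentiableAt ℝ (fun t => θ p.1 t) p.2
  cont_dt : ContinuousOn (fun p : ℝ × ℝ => deriv (fun t => θ p.1 t) p.2) D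
  diff_x : ∀ p ∈ D, DifferentiableAt ℝ (fun x => θ x p.2) p.1
  diff_xx : ∀ p ∈ D, DifferentiableAt ℝ (deriv fun x => θ x p.2) p.1
  cont_dx : ContinuousOn (fun p : ℝ × ℝ => deriv (fun x => θ x p.2) p.1) D
  cont_dxx : ContinuousOn (fun p : ℝ × ℝ => deriv (deriv fun x => θ x p.2) p.1) D
  integrable : ∀ p ∈ D,
    Integrable fun y : ℝ => (θ p.1 p.2 - θ y p.2) / |p.1 - y| ^ (1 + 2 * s)
  eqn : ∀ p ∈ D,
    deriv (fun t => θ p.1 t) p.2 + θ p.1 p.2 * deriv (fun x => θ x p.2) p.1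
      + fracLap s (fun x => θ x p.2) p.1
      - ε₁ * deriv (deriv fun x => θ x p.2) p.1 = 0

/-!
For `s < 1 / 2` two comparison arguments are run at the maxima of suitable functions; a small
multiple of a logarithmic weight makes these maxima attained, at a cost that vanishes with it.

At a maximum of value `m`, a function with `L²` norm at most `K` has fractional Laplacian at least
`c * m ^ (1 + 4 * s)`. The equation then gives `m' ≤ -c * m ^ (1 + 4 * s)`, so that `|θ| ≤ 1 / 2`
after a waiting time that depends only on `K` and `s`, whatever the initial size of `θ`.

From then on the difference `θ x t - θ y t` is compared with `ω = ((|x - y| + r t) / L) ^ α`, where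
`r' = -κ * r ^ (1 - 2 * s)` decreases from `L` to `0` in finite time. At a maximum of
`θ x t - θ y t - ω` with `ω` active, the drift and the shrinking of `r` cost at most
`α * ω / (|x - y| + r) * (ω + κ * r ^ (1 - 2 * s))`. Because `ω ≤ 1` and `1 - 2 * s ≤ α`, this is at
most `2 * α * κ * ω / |x - y| ^ (2 * s)`, and `κ` is chosen so that the dissipation gained from the
concavity of `ω` absorbs it. The viscous term has the favourable sign, whence the uniformity in the
viscosity. When `r` vanishes, the Hölder bound is left.

For `1 / 2 ≤ s`, absolute convergence of the integral defining `(-Δ)^s θ` makes `θ` constant in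
space.
-/

/-! ### Maximum principles -/

section Maxima

variable {f g : ℝ → ℝ} {x y : ℝ}

lemma deriv_deriv_nonpos_of_isLocalMax (h : IsLocalMax f x) (hf : ContinuousAt f x) :
    deriv (deriv f) x ≤ 0 := by
  by_contra! hpos
  have hmin : IsLocalMin f x := isLocalMin_of_deriv_deriv_pos hpos h.deriv_eq_zero hf
  have hconst : f =ᶠ[nhds x] fun _ => f x := by
    filter_upwards [h, hmin] with z h₁ h₂ using le_antisymm h₁ h₂
  have hzero : deriv (deriv f) x = 0 := by simpa using hconst.deriv.deriv_eq
  exact hpos.ne' hzero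

lemma nonneg_of_hasDerivAt_of_isMaxOn_Icc {a d t : ℝ} (hat : a < t) (hf : HasDerivAt f d t)
    (hmax : IsMaxOn f (Icc a t) t) : 0 ≤ d := by
  have hcone : a - t ∈ posTangentConeAt (Icc a t) t :=
    sub_mem_posTangentConeAt_of_segment_subset (by rw [segment_symm, segment_eq_Icc hat.le])
  have hle : (a - t) * d ≤ 0 := by
    simpa using
      hmax.localize.hasFDerivWithinAt_nonpos hf.hasDerivWithinAt.hasFDerivWithinAt hcone
  nlinarith

lemma mul_le_of_hasDerivAt_of_exp_mul_le {φ : ℝ → ℝ} {lam d a r : ℝ} (har : a < r)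
    (hφ : HasDerivAt φ d r)
    (hmax : ∀ q ∈ Icc a r, exp (-lam * (q - a)) * φ q ≤ exp (-lam * (r - a)) * φ r) :
    lam * φ r ≤ d := by
  have hexp : HasDerivAt (fun q => exp (-lam * (q - a))) (exp (-lam * (r - a)) * -lam) r := by
    simpa using (((hasDerivAt_id r).sub_const a).const_mul (-lam)).exp
  have hnonneg := nonneg_of_hasDerivAt_of_isMaxOn_Icc har (hexp.mul hφ) hmax
  rw [mul_assoc, ← mul_add] at hnonneg
  linarith [nonneg_of_mul_nonneg_right hnonneg (exp_pos _)]

lemma deriv_eq_of_isMax_sub_sub {Ω : ℝ → ℝ} {w : ℝ} (hf : DifferentiableAt ℝ f x)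
    (hg : DifferentiableAt ℝ g y) (hΩ : HasDerivAt Ω w (x - y))
    (hmax : ∀ a b, f a - g b - Ω (a - b) ≤ f x - g y - Ω (x - y)) :
    deriv f x = w ∧ deriv g y = w := by
  have hx : IsLocalMax (fun a => f a - g y - Ω (a - y)) x :=
    Eventually.of_forall fun a => hmax a y
  have hy : IsLocalMax (fun b => f x - g b - Ω (x - b)) y :=
    Eventually.of_forall fun b => hmax x b
  have hx' := hx.hasDerivAt_eq_zero
    ((hf.hasDerivAt.sub_const _).sub (HasDerivAt.comp_sub_const x y hΩ))
  have hy' := hy.hasDerivAt_eq_zero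
    ((hg.hasDerivAt.const_sub _).sub (HasDerivAt.comp_const_sub x y hΩ))
  exact ⟨by linarith, by linarith⟩

lemma deriv_deriv_le_of_isMax_sub_sub {Ω : ℝ → ℝ} (hf : Differentiable ℝ f)
    (hg : Differentiable ℝ g) (hf' : Differentiable ℝ (deriv f)) (hg' : Differentiable ℝ (deriv g))
    (hmax : ∀ a b, f a - g b - Ω (a - b) ≤ f x - g y - Ω (x - y)) :
    deriv (deriv f) x ≤ deriv (deriv g) y := by
  have hloc : IsLocalMax (fun z => f (x + z) - g (y + z)) 0 := Eventually.of_forall fun z => by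
    have := hmax (x + z) (y + z)
    rw [add_sub_add_right_eq_sub] at this
    simp only [add_zero]
    linarith
  have hderiv : deriv (fun z => f (x + z) - g (y + z))
      = fun z => deriv f (x + z) - deriv g (y + z) := by
    ext z
    exact ((hf _).hasDerivAt.comp_const_add x z |>.sub
      ((hg _).hasDerivAt.comp_const_add y z)).deriv
  have hderiv₂ : deriv (fun z => deriv f (x + z) - deriv g (y + z)) 0
      = deriv (deriv f) (x + 0) - deriv (deriv g) (y + 0) :=
    ((hf' _).hasDerivAt.comp_const_add x 0 |>.sub
      ((hg' _).hasDerivAt.comp_const_add y 0)).deriv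
  have hcont : Continuous fun z => f (x + z) - g (y + z) := by
    have := hf.continuous
    have := hg.continuous
    fun_prop
  have hnonpos := deriv_deriv_nonpos_of_isLocalMax hloc hcont.continuousAt
  rw [hderiv, hderiv₂, add_zero, add_zero] at hnonpos
  linarith

end Maxima

lemma exists_isMax_of_compl_neg {X : Type*} [TopologicalSpace X] {H : X → ℝ → ℝ} {a b : ℝ}
    {S : Set X} (hS : IsCompact S)
    (hH : ContinuousOn (fun p : X × ℝ => H p.1 p.2) (univ ×ˢ Icc a b))
    (hneg : ∀ x ∉ S, ∀ t ∈ Icc a b, H x t < 0) {x₁ : X} {t₁ : ℝ} (ht₁ : t₁ ∈ Icc a b)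
    (hpos : 0 < H x₁ t₁) :
    ∃ x, ∃ t ∈ Icc a b, 0 < H x t ∧ ∀ y, ∀ r ∈ Icc a b, H y r ≤ H x t := by
  have hx₁ : x₁ ∈ S := by
    by_contra h
    exact lt_asymm hpos (hneg x₁ h t₁ ht₁)
  obtain ⟨⟨x, t⟩, ⟨-, ht⟩, hmax⟩ := (hS.prod isCompact_Icc).exists_isMaxOn ⟨(x₁, t₁), hx₁, ht₁⟩
    (hH.mono (prod_mono (subset_univ S) subset_rfl))
  have hxt : 0 < H x t := hpos.trans_le (hmax (show (x₁, t₁) ∈ S ×ˢ Icc a b from ⟨hx₁, ht₁⟩))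
  refine ⟨x, t, ht, hxt, fun y r hr => ?_⟩
  by_cases hy : y ∈ S
  · exact hmax (show (y, r) ∈ S ×ˢ Icc a b from ⟨hy, hr⟩)
  · exact ((hneg y hy r hr).trans hxt).le

/- A positive value of `Φ` makes `exp (-lam * (t - a)) * Φ x t - η * ψ x` positive somewhere for
small `η`; at its maximum the time derivative contradicts the differential inequality. -/
theorem nonpos_of_penalized_maxima {X : Type*} [TopologicalSpace X] {Φ : X → ℝ → ℝ} {ψ : X → ℝ}
    {a b lam M : ℝ} (hψ : Continuous ψ) (hψ₀ : ∀ x, 0 ≤ ψ x)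
    (hψ_lim : Tendsto ψ (cocompact X) atTop) (hlam : 0 ≤ lam)
    (hΦ : ContinuousOn (fun p : X × ℝ => Φ p.1 p.2) (univ ×ˢ Icc a b))
    (hM : ∀ x, ∀ t ∈ Icc a b, Φ x t ≤ M) (ha : ∀ x, Φ x a ≤ 0)
    (hstep : ∀ x, ∀ t ∈ Ioc a b, ∀ P > 0, P * ψ x < Φ x t →
      (∀ y, Φ y t - P * ψ y ≤ Φ x t - P * ψ x) →
      ∃ d, HasDerivAt (Φ x) d t ∧ d < lam * Φ x t)
    (x : X) {t : ℝ} (ht : t ∈ Icc a b) : Φ x t ≤ 0 := by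
  by_contra! hpos
  have hdecay_le : ∀ r, a ≤ r → exp (-lam * (r - a)) ≤ 1 := fun r hr =>
    exp_le_one_iff.2 (by nlinarith)
  obtain ⟨η, hη, hηx⟩ : ∃ η > 0, η * ψ x < exp (-lam * (t - a)) * Φ x t := by
    simpa only [mul_comm (ψ x)] using exists_pos_mul_lt (mul_pos (exp_pos _) hpos) (ψ x)
  obtain ⟨S, hS, hSψ⟩ := mem_cocompact.1 (hψ_lim.eventually (eventually_gt_atTop (M / η)))
  have hM₀ : 0 < M := hpos.trans_le (hM x t ht)
  obtain ⟨y, r, hr, hHy, hmax⟩ := exists_isMax_of_compl_neg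
    (H := fun y r => exp (-lam * (r - a)) * Φ y r - η * ψ y) hS
    ((Continuous.continuousOn (by fun_prop)).mul hΦ |>.sub
      (Continuous.continuousOn (by fun_prop)))
    (fun y hy r hr => by
      have hψy : M < ψ y * η := (div_lt_iff₀ hη).1 (hSψ hy)
      have hΦy : exp (-lam * (r - a)) * Φ y r ≤ M :=
        (mul_le_mul_of_nonneg_left (hM y r hr) (exp_pos _).le).trans
          (mul_le_of_le_one_left hM₀.le (hdecay_le r hr.1))
      linarith) ht (sub_pos.2 hηx)
  have har : a < r := by
    refine hr.1.lt_of_ne fun har => ?_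
    subst har
    have := mul_nonneg hη.le (hψ₀ y)
    have := ha y
    simp only [sub_self, mul_zero, exp_zero, one_mul] at hHy
    linarith
  set E := exp (-lam * (r - a))
  have hE₀ : 0 < E := exp_pos _
  have hP : ∀ z, E * (Φ z r - η / E * ψ z) = E * Φ z r - η * ψ z := fun z => by field_simp
  obtain ⟨d, hd, hlt⟩ := hstep y r ⟨har, hr.2⟩ (η / E) (by positivity)
    (sub_pos.1 (pos_of_mul_pos_right (by rw [hP]; exact hHy) hE₀.le))
    (fun z => le_of_mul_le_mul_left (by rw [hP, hP]; exact hmax z r hr) hE₀)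
  have hrate : lam * Φ y r ≤ d := mul_le_of_hasDerivAt_of_exp_mul_le har hd fun q hq => by
    have := hmax y q ⟨hq.1, hq.2.trans hr.2⟩
    linarith
  exact hlt.not_ge hrate

/-! ### The logarithmic weight -/

/-- The weight `1 + log √(1 + x²)`, which penalises points near infinity. It grows slowly enough to
be integrable at infinity against the kernel `|z| ^ (-1 - 2 * s)` for every `0 < s`. -/
noncomputable def logWeight (x : ℝ) : ℝ := 1 + log (1 + x ^ 2) / 2

/-- The mass of the increment bound `log (1 + |z|)` of `logWeight` against the kernel of order
`2 * s`. -/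
noncomputable def logMass (s : ℝ) : ℝ := ∫ z : ℝ, log (1 + |z|) / |z| ^ (1 + 2 * s)

lemma one_le_logWeight (x : ℝ) : 1 ≤ logWeight x := by
  have : 0 ≤ log (1 + x ^ 2) := log_nonneg (by nlinarith)
  unfold logWeight
  linarith

lemma logWeight_add_le (x z : ℝ) : logWeight (x + z) ≤ logWeight x + log (1 + |z|) := by
  have hle : 1 + (x + z) ^ 2 ≤ (1 + x ^ 2) * (1 + |z|) ^ 2 := by
    have hxz : x * z ≤ |x| * |z| := (le_abs_self _).trans_eq (abs_mul x z)
    have hx : |x| ≤ 1 + x ^ 2 := by nlinarith [sq_abs x, abs_nonneg x]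
    nlinarith [sq_abs z, mul_le_mul_of_nonneg_right hx (abs_nonneg z), mul_nonneg (sq_nonneg x)
      (sq_nonneg |z|)]
  have hlog := log_le_log (by positivity) hle
  rw [log_mul (by positivity) (by positivity), log_pow] at hlog
  push_cast at hlog
  unfold logWeight
  linarith

lemma abs_logWeight_sub_le (x z : ℝ) : |logWeight x - logWeight (x + z)| ≤ log (1 + |z|) := by
  have h₁ := logWeight_add_le x z
  have h₂ := logWeight_add_le (x + z) (-z)
  rw [add_neg_cancel_right, abs_neg] at h₂
  exact abs_le.2 ⟨by linarith, by linarith⟩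

lemma hasDerivAt_logWeight (x : ℝ) : HasDerivAt logWeight (x / (1 + x ^ 2)) x := by
  have h : HasDerivAt (fun y : ℝ => 1 + y ^ 2) (2 * x) x := by
    simpa using (hasDerivAt_pow 2 x).const_add 1
  exact (((h.log (by positivity)).div_const 2).const_add 1).congr_deriv (by field_simp)

lemma deriv_logWeight : deriv logWeight = fun x => x / (1 + x ^ 2) :=
  funext fun x => (hasDerivAt_logWeight x).deriv

lemma differentiable_logWeight : Differentiable ℝ logWeight :=
  fun x => (hasDerivAt_logWeight x).differentiableAt

lemma hasDerivAt_deriv_logWeight (x : ℝ) :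
    HasDerivAt (deriv logWeight) ((1 - x ^ 2) / (1 + x ^ 2) ^ 2) x := by
  have h : HasDerivAt (fun y : ℝ => 1 + y ^ 2) (2 * x) x := by
    simpa using (hasDerivAt_pow 2 x).const_add 1
  rw [deriv_logWeight]
  exact ((hasDerivAt_id x).div h (by positivity)).congr_deriv (by simp only [id]; ring)

lemma abs_deriv_logWeight_le (x : ℝ) : |deriv logWeight x| ≤ 1 := by
  rw [deriv_logWeight, abs_div, abs_of_pos (show 0 < 1 + x ^ 2 by positivity),
    div_le_one (by positivity)]
  nlinarith [sq_abs x, abs_nonneg x]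

lemma abs_deriv_deriv_logWeight_le (x : ℝ) : |deriv (deriv logWeight) x| ≤ 1 := by
  rw [(hasDerivAt_deriv_logWeight x).deriv, abs_div,
    abs_of_pos (show 0 < (1 + x ^ 2) ^ 2 by positivity), div_le_one (by positivity), abs_le]
  constructor <;> nlinarith [sq_nonneg x, sq_nonneg (x ^ 2)]

lemma tendsto_logWeight_cocompact : Tendsto logWeight (cocompact ℝ) atTop := by
  have hsq : Tendsto (fun x : ℝ => 1 + x ^ 2) (cocompact ℝ) atTop := by
    refine tendsto_atTop_mono (fun x => ?_) (tendsto_norm_cocompact_atTop (E := ℝ))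
    rw [norm_eq_abs]
    nlinarith [sq_abs x, abs_nonneg x]
  exact tendsto_atTop_add_const_left _ 1
    ((tendsto_log_atTop.comp hsq).atTop_div_const two_pos)

lemma log_one_add_le_rpow_div {x q : ℝ} (hx : 0 ≤ x) (hq : 0 < q) (hq₁ : q ≤ 1) :
    log (1 + x) ≤ x ^ q / q := by
  have hadd : (1 + x) ^ q ≤ 1 + x ^ q := by
    simpa using rpow_add_le_add_rpow zero_le_one hx hq.le hq₁
  have hlog := log_le_log (by positivity) hadd
  rw [log_rpow (by positivity)] at hlog
  have hsub := log_le_sub_one_of_pos (show 0 < 1 + x ^ q by positivity)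
  rw [le_div_iff₀ hq]
  linarith

lemma integrable_log_one_add_abs_div {s : ℝ} (hs₀ : 0 < s) (hs : s < 1 / 2) :
    Integrable fun z : ℝ => log (1 + |z|) / |z| ^ (1 + 2 * s) := by
  have hradial := integrable_fun_norm_addHaar (E := ℝ) volume
    (f := fun y : ℝ => log (1 + y) / y ^ (1 + 2 * s))
  simp only [norm_eq_abs, Module.finrank_self, tsub_self, pow_zero, one_smul] at hradial
  refine hradial.2 ?_
  have hbound : ∀ q y : ℝ, 0 < q → q ≤ 1 → 0 < y →
      ‖log (1 + y) / y ^ (1 + 2 * s)‖ ≤ q⁻¹ * y ^ (q - 1 - 2 * s) := fun q y hq hq₁ hy => by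
    rw [norm_of_nonneg (div_nonneg (log_nonneg (by linarith)) (by positivity)), sub_sub,
      rpow_sub hy, ← mul_div_assoc, ← div_eq_inv_mul]
    gcongr
    exact log_one_add_le_rpow_div hy.le hq hq₁
  have hmeas : ∀ S : Set ℝ, AEStronglyMeasurable (fun y : ℝ => log (1 + y) / y ^ (1 + 2 * s))
      (volume.restrict S) := fun S => by
    have : Measurable fun y : ℝ => log (1 + y) / y ^ (1 + 2 * s) := by fun_prop
    exact this.aestronglyMeasurable
  rw [← Ioc_union_Ioi_eq_Ioi (zero_le_one' ℝ)]
  refine IntegrableOn.union ?_ ?_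
  · have hnear : IntegrableOn (fun y : ℝ => y ^ (1 - 1 - 2 * s)) (Ioc 0 1) :=
      (intervalIntegrable_iff_integrableOn_Ioc_of_le zero_le_one).1
        (intervalIntegral.intervalIntegrable_rpow' (by linarith))
    refine (hnear.const_mul 1⁻¹).mono' (hmeas _) ?_
    exact (ae_restrict_mem measurableSet_Ioc).mono fun y hy => hbound 1 y one_pos le_rfl hy.1
  · have hfar : IntegrableOn (fun y : ℝ => y ^ (s - 1 - 2 * s)) (Ioi 1) :=
      integrableOn_Ioi_rpow_of_lt (by linarith) one_pos
    refine (hfar.const_mul s⁻¹).mono' (hmeas _) ?_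
    exact (ae_restrict_mem measurableSet_Ioi).mono fun y hy =>
      hbound s y hs₀ (by linarith) (one_pos.trans hy)

/-! ### Fractional Laplacians at extremal points -/

/-- Absolute convergence of the integral that defines `fracLap s u x`. -/
def FracIntegrable (s : ℝ) (u : ℝ → ℝ) (x : ℝ) : Prop :=
  Integrable fun y : ℝ => (u x - u y) / |x - y| ^ (1 + 2 * s)

section FracLap

variable {s σ x : ℝ} {u v : ℝ → ℝ}

lemma fracC_pos (hs₀ : 0 < s) (hs : s < 1) : 0 < fracC s := by
  have hΓ : Gamma (-s) ≠ 0 := by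
    refine Gamma_ne_zero fun m hm => ?_
    obtain rfl : s = m := by linarith
    have h₀ : 0 < m := by exact_mod_cast hs₀
    have h₁ : m < 1 := by exact_mod_cast hs
    omega
  exact div_pos (mul_pos (by positivity) (Gamma_pos_of_pos (by linarith)))
    (mul_pos (sqrt_pos.2 pi_pos) (abs_pos.2 hΓ))

lemma fracIntegrable_iff_integrable_add :
    FracIntegrable s u x ↔ Integrable fun z : ℝ => (u x - u (x + z)) / |z| ^ (1 + 2 * s) := by
  refine ⟨fun h => by simpa using h.comp_add_left x, fun h => ?_⟩
  simpa [FracIntegrable, neg_add_eq_sub, abs_sub_comm] using h.comp_add_left (-x)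

lemma fracLap_eq_integral_add (s : ℝ) (u : ℝ → ℝ) (x : ℝ) :
    fracLap s u x = fracC s * ∫ z : ℝ, (u x - u (x + z)) / |z| ^ (1 + 2 * s) := by
  rw [fracLap, ← integral_add_left_eq_self _ x]
  simp

lemma FracIntegrable.sub_const_mul (hu : FracIntegrable s u x) (hv : FracIntegrable s v x)
    (σ : ℝ) : FracIntegrable s (fun y => u y - σ * v y) x :=
  (hu.sub (hv.const_mul σ)).congr (Eventually.of_forall fun y => by
    simp only [Pi.sub_apply]
    ring)

lemma fracLap_sub_const_mul (hu : FracIntegrable s u x) (hv : FracIntegrable s v x) (σ : ℝ) :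
    fracLap s (fun y => u y - σ * v y) x = fracLap s u x - σ * fracLap s v x := by
  simp only [fracLap]
  rw [mul_left_comm, ← mul_sub, ← integral_const_mul σ, ← integral_sub hu (hv.const_mul σ)]
  congr 2 with y
  ring

lemma reflect_sub_div_rpow (s : ℝ) (u : ℝ → ℝ) (x y : ℝ) :
    (-u (-x) - -u (-y)) / |x - y| ^ (1 + 2 * s)
      = -((u (-x) - u (-y)) / |-x - -y| ^ (1 + 2 * s)) := by
  rw [← neg_sub_neg y x, neg_sub_neg, abs_sub_comm (-x), neg_sub_neg]
  ring

lemma FracIntegrable.reflect (hu : FracIntegrable s u (-x)) :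
    FracIntegrable s (fun y => -u (-y)) x := by
  simp only [FracIntegrable, reflect_sub_div_rpow s u]
  exact (Integrable.comp_neg hu).neg

lemma fracLap_reflect (s : ℝ) (u : ℝ → ℝ) (x : ℝ) :
    fracLap s (fun y => -u (-y)) x = -fracLap s u (-x) := by
  simp only [fracLap, reflect_sub_div_rpow s u]
  rw [integral_neg, mul_neg,
    integral_neg_eq_self fun y => (u (-x) - u y) / |-x - y| ^ (1 + 2 * s)]

lemma norm_logWeight_sub_div_le (s x z : ℝ) :
    ‖(logWeight x - logWeight (x + z)) / |z| ^ (1 + 2 * s)‖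
      ≤ log (1 + |z|) / |z| ^ (1 + 2 * s) := by
  rw [norm_div, norm_eq_abs, norm_of_nonneg (show 0 ≤ |z| ^ (1 + 2 * s) by positivity)]
  gcongr
  exact abs_logWeight_sub_le x z

lemma fracIntegrable_logWeight (hs₀ : 0 < s) (hs : s < 1 / 2) (x : ℝ) :
    FracIntegrable s logWeight x := by
  have := differentiable_logWeight.continuous.measurable
  refine fracIntegrable_iff_integrable_add.2 <|
    (integrable_log_one_add_abs_div hs₀ hs).mono' ?_
      (Eventually.of_forall (norm_logWeight_sub_div_le s x))
  exact Measurable.aestronglyMeasurable (by fun_prop)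

lemma abs_fracLap_logWeight_le (hs₀ : 0 < s) (hs : s < 1 / 2) (x : ℝ) :
    |fracLap s logWeight x| ≤ fracC s * logMass s := by
  have hC := fracC_pos hs₀ (hs.trans (by norm_num))
  rw [fracLap_eq_integral_add, abs_mul, abs_of_pos hC]
  gcongr
  exact norm_integral_le_of_norm_le (integrable_log_one_add_abs_div hs₀ hs)
    (Eventually.of_forall (norm_logWeight_sub_div_le s x))

lemma integral_comp_mul_div_le_integral_div_rpow {N : ℝ → ℝ} {e : ℝ} (hs : 0 ≤ 1 + 2 * s)
    (he : e ≠ 0) (hN : ∀ z, 0 ≤ N z) (hint : Integrable fun z : ℝ => N z / |z| ^ (1 + 2 * s)) :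
    (∫ τ in (-1 : ℝ)..1, N (e * τ)) / |e| ^ (2 * s) ≤ ∫ z : ℝ, N z / |z| ^ (1 + 2 * s) := by
  have he' : 0 < |e| := abs_pos.2 he
  set k : ℝ → ℝ := fun τ => |e| * (N (e * τ) / |e * τ| ^ (1 + 2 * s))
  have hk : Integrable k := (hint.comp_mul_left' he).const_mul |e|
  have hk₀ : ∀ τ, 0 ≤ k τ := fun τ =>
    mul_nonneg he'.le (div_nonneg (hN _) (by positivity))
  have hscale : ∫ τ, k τ = ∫ z : ℝ, N z / |z| ^ (1 + 2 * s) := by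
    rw [integral_const_mul, Measure.integral_comp_mul_left (fun z => N z / |z| ^ (1 + 2 * s)),
      smul_eq_mul, abs_inv, mul_inv_cancel_left₀ he'.ne']
  have hle : ∀ τ ∈ Ioc (-1 : ℝ) 1, τ ≠ 0 → N (e * τ) / |e| ^ (2 * s) ≤ k τ := fun τ hτ hτ₀ => by
    have hpow : |e * τ| ^ (1 + 2 * s) ≤ |e| * |e| ^ (2 * s) := by
      rw [← rpow_one |e|, ← rpow_mul he'.le, one_mul, ← rpow_add he', abs_mul]
      gcongr
      exact mul_le_of_le_one_right he'.le (abs_le.2 ⟨hτ.1.le, hτ.2⟩)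
    simp only [k]
    rw [← mul_div_assoc, div_le_div_iff₀ (by positivity) (by positivity), mul_comm |e|, mul_assoc]
    exact mul_le_mul_of_nonneg_left hpow (hN _)
  rw [← hscale, intervalIntegral.integral_of_le (by norm_num), ← integral_div]
  refine (integral_mono_of_nonneg (Eventually.of_forall fun τ => by
    have := hN (e * τ); positivity) hk.integrableOn ?_).trans
    (setIntegral_le_integral hk (Eventually.of_forall hk₀))
  filter_upwards [ae_restrict_mem measurableSet_Ioc,
    ae_restrict_of_ae (Measure.ae_ne volume (0 : ℝ))] with τ hτ hτ₀ using hle τ hτ hτ₀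

lemma half_le_integral_sub_of_integral_sq_le {h : ℝ → ℝ} {m : ℝ} (hh : Continuous h) (hm : 0 < m)
    (hsq : ∫ τ in (-1 : ℝ)..1, max (h τ) 0 ^ 2 ≤ m ^ 2) :
    m / 2 ≤ ∫ τ in (-1 : ℝ)..1, (m - h τ) := calc
  m / 2 ≤ ∫ τ in (-1 : ℝ)..1, (m / 2 - (2 * m)⁻¹ * max (h τ) 0 ^ 2) := by
    rw [intervalIntegral.integral_sub (by simp)
      (Continuous.intervalIntegrable (by fun_prop) _ _), intervalIntegral.integral_const,
      intervalIntegral.integral_const_mul, smul_eq_mul]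
    have hscaled := mul_le_mul_of_nonneg_left hsq (show 0 ≤ (2 * m)⁻¹ by positivity)
    have hcancel : (2 * m)⁻¹ * m ^ 2 = m / 2 := by field_simp
    linarith
  _ ≤ ∫ τ in (-1 : ℝ)..1, (m - h τ) := by
    refine intervalIntegral.integral_mono_on (by norm_num)
      (Continuous.intervalIntegrable (by fun_prop) _ _)
      (Continuous.intervalIntegrable (by fun_prop) _ _) fun τ _ => ?_
    set q := max (h τ) 0
    have hq : h τ ≤ q := le_max_left _ _
    have hsquare : m - q - (m / 2 - (2 * m)⁻¹ * q ^ 2) = (2 * m)⁻¹ * (m - q) ^ 2 := by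
      field_simp
      ring
    have := mul_nonneg (show 0 ≤ (2 * m)⁻¹ by positivity) (sq_nonneg (m - q))
    linarith

/- On the interval of length `2R` with `R = K² / (f x)²`, the `L²` bound forces `f ≤ f x / 2` on
average. -/
lemma mul_rpow_le_fracLap_of_isMax {f : ℝ → ℝ} {K : ℝ} (hs₀ : 0 < s) (hs : s < 1) (hK : 0 < K)
    (hf : Continuous f) (hx : 0 < f x) (hmax : ∀ y, f y ≤ f x) (hint : FracIntegrable s f x)
    (hL2 : Integrable fun y => max (f y) 0 ^ 2) (hL2K : ∫ y, max (f y) 0 ^ 2 ≤ K ^ 2) :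
    fracC s / (2 * K ^ (4 * s)) * f x ^ (1 + 4 * s) ≤ fracLap s f x := by
  set m := f x
  set R := K ^ 2 / m ^ 2 with hR
  have hR₀ : 0 < R := by positivity
  have hkernel := integral_comp_mul_div_le_integral_div_rpow (by linarith) hR₀.ne'
    (fun z => sub_nonneg.2 (hmax (x + z))) (fracIntegrable_iff_integrable_add.1 hint)
  have hsq : ∫ τ in (-1 : ℝ)..1, max (f (x + R * τ)) 0 ^ 2 ≤ m ^ 2 := by
    rw [intervalIntegral.integral_of_le (by norm_num)]
    refine (setIntegral_le_integral ((hL2.comp_add_left x).comp_mul_left' hR₀.ne')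
      (Eventually.of_forall fun τ => sq_nonneg _)).trans ?_
    rw [Measure.integral_comp_mul_left (fun z => max (f (x + z)) 0 ^ 2),
      integral_add_left_eq_self (fun z => max (f z) 0 ^ 2) x, smul_eq_mul, abs_inv, abs_of_pos hR₀,
      inv_mul_le_iff₀ hR₀, hR, div_mul_cancel₀ _ (by positivity)]
    exact hL2K
  have havg := half_le_integral_sub_of_integral_sq_le (h := fun τ => f (x + R * τ)) (by fun_prop)
    hx hsq
  have hpow : m ^ (1 + 4 * s) / (2 * K ^ (4 * s)) = m / 2 / |R| ^ (2 * s) := by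
    have hdouble : ∀ c : ℝ, 0 < c → (c ^ 2) ^ (2 * s) = c ^ (4 * s) := fun c hc => by
      rw [← rpow_natCast, ← rpow_mul hc.le]
      congr 1
      push_cast
      ring
    rw [abs_of_pos hR₀, hR, div_rpow (by positivity) (by positivity), hdouble K hK, hdouble m hx,
      rpow_add hx, rpow_one]
    field_simp
  rw [fracLap_eq_integral_add, div_mul_eq_mul_div, mul_div_assoc, hpow]
  have := fracC_pos hs₀ hs
  gcongr
  exact (div_le_div_of_nonneg_right havg (by positivity)).trans hkernel

lemma integral_shift_sub_le {F G : ℝ → ℝ} (hF : Continuous F) (hG : Continuous G)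
    (hFG : ∀ τ, F τ ≤ G τ) :
    ∫ τ in (-1 : ℝ)..1, (F (1 + τ) - G τ) ≤ ∫ τ in (0 : ℝ)..1, (F (1 + τ) - G (-τ)) := by
  have hF' : ∀ a b, IntervalIntegrable F volume a b := fun a b => hF.intervalIntegrable a b
  have hG' : ∀ a b, IntervalIntegrable G volume a b := fun a b => hG.intervalIntegrable a b
  rw [intervalIntegral.integral_sub (Continuous.intervalIntegrable (by fun_prop) _ _) (hG' _ _),
    intervalIntegral.integral_sub (Continuous.intervalIntegrable (by fun_prop) _ _)
      (Continuous.intervalIntegrable (by fun_prop) _ _),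
    intervalIntegral.integral_comp_add_left, intervalIntegral.integral_comp_add_left,
    intervalIntegral.integral_comp_neg]
  have hFsplit := intervalIntegral.integral_add_adjacent_intervals (hF' 0 1) (hF' 1 2)
  have hGsplit := intervalIntegral.integral_add_adjacent_intervals (hG' (-1) 0) (hG' 0 1)
  have hle := intervalIntegral.integral_mono_on zero_le_one (hF' 0 1) (hG' 0 1) fun τ _ => hFG τ
  norm_num at hFsplit hGsplit hle ⊢
  linarith

lemma integral_le_of_add_reflect_le {h : ℝ → ℝ} {c : ℝ} (hh : Continuous h)
    (hle : ∀ τ ∈ Icc (0 : ℝ) 1, h τ + h (1 - τ) ≤ 2 * c) : ∫ τ in (0 : ℝ)..1, h τ ≤ c := by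
  have hreflect : ∫ τ in (0 : ℝ)..1, h (1 - τ) = ∫ τ in (0 : ℝ)..1, h τ := by simp
  have hsum : ∫ τ in (0 : ℝ)..1, (h τ + h (1 - τ)) ≤ ∫ _ in (0 : ℝ)..1, 2 * c :=
    intervalIntegral.integral_mono_on zero_le_one
      (Continuous.intervalIntegrable (by fun_prop) _ _) (by simp) hle
  rw [intervalIntegral.integral_add (hh.intervalIntegrable _ _)
    (Continuous.intervalIntegrable (by fun_prop) _ _), hreflect, intervalIntegral.integral_const,
    smul_eq_mul] at hsum
  linarith

lemma add_le_two_mul_of_concaveOn {ω : ℝ → ℝ} (hω : ConcaveOn ℝ (Ici 0) ω) {a b : ℝ}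
    (ha : 0 ≤ a) (hb : 0 ≤ b) : ω a + ω b ≤ 2 * ω ((a + b) / 2) := by
  have hmid := hω.2 (mem_Ici.2 ha) (mem_Ici.2 hb) one_half_pos.le one_half_pos.le (by norm_num)
  simp only [smul_eq_mul] at hmid
  rw [show 1 / 2 * a + 1 / 2 * b = (a + b) / 2 by ring] at hmid
  linarith

/- The increments of `f` at `x` and of `g` at `y` are compared along the line through both points;
since `f ≤ g`, the overlapping halves of the two unit windows cancel. -/
lemma integral_translate_sub_le_of_isMax {f g ω : ℝ → ℝ} {x y : ℝ} (hf : Continuous f)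
    (hg : Continuous g) (hfg : ∀ z, f z ≤ g z) (hω : ConcaveOn ℝ (Ici 0) ω)
    (hmax : ∀ a b, f a - g b - ω |a - b| ≤ f x - g y - ω |x - y|) :
    ∫ τ in (-1 : ℝ)..1, (f (x + (x - y) * τ) - g (y + (x - y) * τ))
      ≤ ω (2 * |x - y|) + (f x - g y - ω |x - y|) := by
  set e := x - y with he
  have hshift := integral_shift_sub_le (F := fun τ => f (y + e * τ)) (G := fun τ => g (y + e * τ))
    (by fun_prop) (by fun_prop) fun τ => hfg _
  refine (Eq.trans_le ?_ hshift).trans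
    (integral_le_of_add_reflect_le (by fun_prop) fun τ hτ => ?_)
  · refine intervalIntegral.integral_congr fun τ _ => ?_
    simp only [he]
    ring_nf
  have hpoint : ∀ τ : ℝ, 0 ≤ 1 + 2 * τ → f (y + e * (1 + τ)) - g (y + e * -τ)
      ≤ ω (|e| * (1 + 2 * τ)) + (f x - g y - ω |e|) := fun τ hτ => by
    have := hmax (y + e * (1 + τ)) (y + e * -τ)
    rw [show y + e * (1 + τ) - (y + e * -τ) = e * (1 + 2 * τ) by ring, abs_mul,
      abs_of_nonneg hτ] at this
    linarith
  have h₁ := hpoint τ (by linarith [hτ.1])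
  have h₂ := hpoint (1 - τ) (by linarith [hτ.2])
  have hconc := add_le_two_mul_of_concaveOn hω
    (mul_nonneg (abs_nonneg e) (show 0 ≤ 1 + 2 * τ by linarith [hτ.1]))
    (mul_nonneg (abs_nonneg e) (show 0 ≤ 1 + 2 * (1 - τ) by linarith [hτ.2]))
  rw [show (|e| * (1 + 2 * τ) + |e| * (1 + 2 * (1 - τ))) / 2 = 2 * |e| by ring] at hconc
  linarith

lemma le_fracLap_sub_of_isMax_sub_sub {f g ω : ℝ → ℝ} {x y : ℝ} (hs₀ : 0 < s) (hs : s < 1)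
    (hf : Continuous f) (hg : Continuous g) (hfg : ∀ z, f z ≤ g z) (hω : ConcaveOn ℝ (Ici 0) ω)
    (hxy : x ≠ y) (hpos : 0 ≤ f x - g y - ω |x - y|)
    (hmax : ∀ a b, f a - g b - ω |a - b| ≤ f x - g y - ω |x - y|)
    (hfx : FracIntegrable s f x) (hgy : FracIntegrable s g y) :
    fracC s * ((2 * ω |x - y| - ω (2 * |x - y|)) / |x - y| ^ (2 * s))
      ≤ fracLap s f x - fracLap s g y := by
  set N : ℝ → ℝ := fun z => f x - f (x + z) - (g y - g (y + z))
  have hN : ∀ z, 0 ≤ N z := fun z => by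
    have := hmax (x + z) (y + z)
    rw [add_sub_add_right_eq_sub] at this
    simp only [N]
    linarith
  rw [fracIntegrable_iff_integrable_add] at hfx hgy
  have hNdiv : (fun z => N z / |z| ^ (1 + 2 * s)) = (fun z => (f x - f (x + z)) / |z| ^ (1 + 2 * s))
      - fun z => (g y - g (y + z)) / |z| ^ (1 + 2 * s) :=
    funext fun z => sub_div _ _ _
  have hkernel := integral_comp_mul_div_le_integral_div_rpow (by linarith) (sub_ne_zero.2 hxy) hN
    (hNdiv ▸ hfx.sub hgy)
  rw [hNdiv, integral_sub' hfx hgy] at hkernel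
  rw [fracLap_eq_integral_add, fracLap_eq_integral_add, ← mul_sub]
  refine mul_le_mul_of_nonneg_left (le_trans ?_ hkernel) (fracC_pos hs₀ hs).le
  gcongr
  have hsplit : ∫ τ in (-1 : ℝ)..1, N ((x - y) * τ) = 2 * (f x - g y)
      - ∫ τ in (-1 : ℝ)..1, (f (x + (x - y) * τ) - g (y + (x - y) * τ)) := by
    rw [show (fun τ => N ((x - y) * τ)) = fun τ => f x - g y
        - (f (x + (x - y) * τ) - g (y + (x - y) * τ)) from funext fun τ => by simp only [N]; ring,
      intervalIntegral.integral_sub (by simp) (Continuous.intervalIntegrable (by fun_prop) _ _),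
      intervalIntegral.integral_const, smul_eq_mul]
    norm_num
  have := integral_translate_sub_le_of_isMax hf hg hfg hω hmax
  linarith

end FracLap

/-! ### The power ordinary differential equation -/

/-- The solution `(p * c * (T - t)) ^ (1 / p)` of `y' = -c * y ^ (1 - p)`. When `0 < c`, it vanishes
at time `T` if `0 < p`, and it blows up there if `p < 0`. -/
noncomputable def powerSolution (p c T t : ℝ) : ℝ := (p * c * (T - t)) ^ p⁻¹

section PowerSolution

variable {p c T t y : ℝ}

lemma powerSolution_pos (h : 0 < p * c * (T - t)) : 0 < powerSolution p c T t :=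
  rpow_pos_of_pos h _

lemma powerSolution_eq_of_rpow_eq (hp : p ≠ 0) (hy : 0 ≤ y) (h : y ^ p = p * c * (T - t)) :
    powerSolution p c T t = y := by
  rw [powerSolution, ← h, rpow_rpow_inv hy hp]

lemma powerSolution_le_of_rpow_le (hp : p < 0) (hy : 0 < y) (h : y ^ p ≤ p * c * (T - t)) :
    powerSolution p c T t ≤ y := by
  rw [← rpow_rpow_inv hy.le hp.ne]
  exact rpow_le_rpow_of_nonpos (by positivity) h (inv_nonpos.2 hp.le)

lemma powerSolution_le_powerSolution (hp : 0 < p) (hc : 0 ≤ c) (hty : t ≤ y) (hyT : y ≤ T) :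
    powerSolution p c T y ≤ powerSolution p c T t :=
  rpow_le_rpow (mul_nonneg (by positivity) (sub_nonneg.2 hyT)) (by gcongr) (by positivity)

lemma continuous_powerSolution (hp : 0 < p) (c T : ℝ) : Continuous (powerSolution p c T) :=
  Continuous.rpow_const (by fun_prop) fun _ => Or.inr (by positivity)

lemma hasDerivAt_powerSolution (hp : p ≠ 0) (h : 0 < p * c * (T - t)) :
    HasDerivAt (powerSolution p c T) (-(c * powerSolution p c T t ^ (1 - p))) t := by
  have hbase : HasDerivAt (fun r => p * c * (T - r)) (-(p * c)) t := by
    simpa using ((hasDerivAt_id t).const_sub T).const_mul (p * c)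
  refine (hbase.rpow_const (p := p⁻¹) (Or.inl h.ne')).congr_deriv ?_
  rw [powerSolution, ← rpow_mul h.le, mul_sub p⁻¹, mul_one, inv_mul_cancel₀ hp]
  field_simp

end PowerSolution

/-! ### Decay of the supremum norm -/

namespace IsClassicalSolution

lemma reflect {s ε : ℝ} {θ : ℝ → ℝ → ℝ} {D : Set (ℝ × ℝ)} (hθ : IsClassicalSolution s ε θ D) :
    IsClassicalSolution s ε (fun x t => -θ (-x) t) ((fun p : ℝ × ℝ => (-p.1, p.2)) ⁻¹' D) := by
  have hR : Continuous fun p : ℝ × ℝ => (-p.1, p.2) := by fun_prop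
  have hmaps := mapsTo_preimage (fun p : ℝ × ℝ => (-p.1, p.2)) D
  have hdt : ∀ x, deriv (fun t => -θ (-x) t) = fun t => -deriv (fun t => θ (-x) t) t := fun x =>
    deriv.fun_neg'
  have hdx : ∀ t, deriv (fun x => -θ (-x) t) = fun x => deriv (fun x => θ x t) (-x) := fun t => by
    ext x
    rw [deriv.fun_neg, deriv_comp_neg (fun y => θ y t), neg_neg]
  have hdxx : ∀ t, deriv (deriv fun x => -θ (-x) t)
      = fun x => -deriv (deriv fun x => θ x t) (-x) := fun t => by
    ext x
    rw [hdx, deriv_comp_neg (deriv fun y => θ y t)]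
  exact
  { bounded := hθ.bounded.imp fun B hB p hp => (abs_neg _).trans_le (hB _ hp)
    cont := (hθ.cont.comp hR.continuousOn hmaps).neg
    diff_t := fun p hp => (hθ.diff_t _ hp).fun_neg
    cont_dt := by
      simp only [hdt]
      exact (hθ.cont_dt.comp hR.continuousOn hmaps).neg
    diff_x := fun p hp => ((hθ.diff_x _ hp).comp p.1 differentiableAt_id.neg).neg
    diff_xx := fun p hp => by
      rw [hdx]
      exact (hθ.diff_xx _ hp).comp p.1 differentiableAt_id.neg
    cont_dx := by
      simp only [hdx]
      exact hθ.cont_dx.comp hR.continuousOn hmaps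
    cont_dxx := by
      simp only [hdxx]
      exact (hθ.cont_dxx.comp hR.continuousOn hmaps).neg
    integrable := fun p hp =>
      FracIntegrable.reflect (u := fun y => θ y p.2) (hθ.integrable (-p.1, p.2) hp)
    eqn := fun p hp => by
      have := hθ.eqn _ hp
      simp only [hdt, hdxx, fracLap_reflect s fun y => θ y p.2]
      simp only [hdx]
      linarith }

variable {s ε : ℝ} {θ : ℝ → ℝ → ℝ}

lemma differentiable (hθ : IsClassicalSolution s ε θ {p | 0 < p.2}) {t : ℝ} (ht : 0 < t) :
    Differentiable ℝ fun x => θ x t :=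
  fun x => hθ.diff_x (x, t) ht

lemma differentiable_deriv (hθ : IsClassicalSolution s ε θ {p | 0 < p.2}) {t : ℝ} (ht : 0 < t) :
    Differentiable ℝ (deriv fun x => θ x t) :=
  fun x => hθ.diff_xx (x, t) ht

lemma fracIntegrable (hθ : IsClassicalSolution s ε θ {p | 0 < p.2}) {t : ℝ} (ht : 0 < t) (x : ℝ) :
    FracIntegrable s (fun y => θ y t) x :=
  hθ.integrable (x, t) ht

end IsClassicalSolution

/-- The function `u - σ * logWeight`, whose supremum is attained when `0 < σ` and `u` is bounded. -/
noncomputable def penalized (σ : ℝ) (u : ℝ → ℝ) (x : ℝ) : ℝ := u x - σ * logWeight x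

section Penalized

variable {s ε σ x t : ℝ} {u : ℝ → ℝ} {θ : ℝ → ℝ → ℝ}

lemma differentiable_penalized (hu : Differentiable ℝ u) : Differentiable ℝ (penalized σ u) :=
  hu.sub (differentiable_logWeight.const_mul σ)

lemma deriv_penalized (hu : Differentiable ℝ u) :
    deriv (penalized σ u) = fun x => deriv u x - σ * deriv logWeight x :=
  funext fun x => ((hu x).hasDerivAt.sub
    ((differentiable_logWeight x).hasDerivAt.const_mul σ)).deriv

lemma hasDerivAt_deriv_penalized (hu : Differentiable ℝ u) (hu' : Differentiable ℝ (deriv u)) :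
    HasDerivAt (deriv (penalized σ u))
      (deriv (deriv u) x - σ * deriv (deriv logWeight) x) x := by
  rw [deriv_penalized hu]
  exact (hu' x).hasDerivAt.sub
    ((hasDerivAt_deriv_logWeight x).differentiableAt.hasDerivAt.const_mul σ)

lemma differentiable_deriv_penalized (hu : Differentiable ℝ u)
    (hu' : Differentiable ℝ (deriv u)) : Differentiable ℝ (deriv (penalized σ u)) :=
  fun _ => (hasDerivAt_deriv_penalized hu hu').differentiableAt

lemma FracIntegrable.penalized (hu : FracIntegrable s u x) (hs₀ : 0 < s) (hs : s < 1 / 2) (σ : ℝ) :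
    FracIntegrable s (penalized σ u) x :=
  hu.sub_const_mul (fracIntegrable_logWeight hs₀ hs x) σ

/-- The factor in the bound for the error that a penalisation with unit coefficient produces in the
Burgers equation with viscosity `ε`, for solutions bounded by `B`. -/
noncomputable def penaltyCost (s ε B : ℝ) : ℝ := B + fracC s * logMass s + ε

lemma penaltyCost_nonneg {B : ℝ} (hs₀ : 0 < s) (hs : s < 1) (hε : 0 ≤ ε) (hB : 0 ≤ B) :
    0 ≤ penaltyCost s ε B := by
  have hmass : 0 ≤ logMass s := integral_nonneg fun z =>
    div_nonneg (log_nonneg (by linarith [abs_nonneg z])) (by positivity)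
  have := fracC_pos hs₀ hs
  unfold penaltyCost
  positivity

lemma abs_penalized_residual_le {B : ℝ} (hs₀ : 0 < s) (hs : s < 1 / 2) (hε : 0 ≤ ε)
    (hθ : IsClassicalSolution s ε θ {p | 0 < p.2}) (ht : 0 < t) (hB : |θ x t| ≤ B) (σ : ℝ) :
    |deriv (fun r => θ x r) t + θ x t * deriv (penalized σ fun y => θ y t) x
        + fracLap s (penalized σ fun y => θ y t) x
        - ε * deriv (deriv (penalized σ fun y => θ y t)) x| ≤ |σ| * penaltyCost s ε B := by
  have hlap : fracLap s (penalized σ fun y => θ y t) x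
      = fracLap s (fun y => θ y t) x - σ * fracLap s logWeight x :=
    fracLap_sub_const_mul (hθ.fracIntegrable ht x) (fracIntegrable_logWeight hs₀ hs x) σ
  have heqn := hθ.eqn (x, t) ht
  rw [(hasDerivAt_deriv_penalized (hθ.differentiable ht) (hθ.differentiable_deriv ht)).deriv,
    deriv_penalized (hθ.differentiable ht), hlap]
  have hdrift : |θ x t * deriv logWeight x| ≤ B := by
    rw [abs_mul]
    exact (mul_le_of_le_one_right (abs_nonneg _) (abs_deriv_logWeight_le x)).trans hB
  have hvisc : |ε * deriv (deriv logWeight) x| ≤ ε := by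
    rw [abs_mul, abs_of_nonneg hε]
    exact mul_le_of_le_one_right hε (abs_deriv_deriv_logWeight_le x)
  calc _ = |σ| * |θ x t * deriv logWeight x + fracLap s logWeight x
        - ε * deriv (deriv logWeight) x| := by
        rw [← abs_mul, ← abs_neg]
        congr 1
        linarith
    _ ≤ _ := by
        gcongr
        exact (abs_sub _ _).trans (add_le_add ((abs_add_le _ _).trans
          (add_le_add hdrift (abs_fracLap_logWeight_le hs₀ hs x))) hvisc)

end Penalized

section Decay

variable {s ε K B x t : ℝ} {θ : ℝ → ℝ → ℝ}

lemma integrable_sq_and_integral_sq_le {f : ℝ → ℝ} (hf : Continuous f) (hK : 0 ≤ K)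
    (h : eLpNorm f 2 volume ≤ ENNReal.ofReal K) :
    Integrable (fun x => f x ^ 2) ∧ ∫ x, f x ^ 2 ≤ K ^ 2 := by
  have hmem : MemLp f 2 volume := ⟨hf.aestronglyMeasurable, h.trans_lt ENNReal.ofReal_lt_top⟩
  refine ⟨hmem.integrable_sq, ?_⟩
  rw [hmem.eLpNorm_eq_integral_rpow_norm (by simp) (by simp), ENNReal.ofReal_le_ofReal_iff hK] at h
  simp only [ENNReal.toReal_ofNat, rpow_ofNat, norm_eq_abs, sq_abs] at h
  rw [← one_div, ← sqrt_eq_rpow] at h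
  exact (sqrt_le_left hK).1 h

lemma integrable_max_zero_sq_and_integral_le {f g : ℝ → ℝ} (hf : Continuous f)
    (hfg : ∀ x, f x ≤ g x) (hg : Integrable fun x => g x ^ 2) (hgK : ∫ x, g x ^ 2 ≤ K ^ 2) :
    Integrable (fun x => max (f x) 0 ^ 2) ∧ ∫ x, max (f x) 0 ^ 2 ≤ K ^ 2 := by
  have hle : ∀ x, max (f x) 0 ^ 2 ≤ g x ^ 2 := fun x =>
    sq_le_sq.2 (by
      rw [abs_of_nonneg (le_max_right _ _)]
      exact max_le ((hfg x).trans (le_abs_self _)) (abs_nonneg _))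
  have hint : Integrable fun x => max (f x) 0 ^ 2 :=
    hg.mono' (Continuous.aestronglyMeasurable (by fun_prop)) (Eventually.of_forall fun x => by
      rw [norm_of_nonneg (sq_nonneg _)]
      exact hle x)
  exact ⟨hint, (integral_mono hint hg hle).trans hgK⟩

/-- The constant `c` in the differential inequality `m' ≤ -c * m ^ (1 + 4 * s)` for the maximum `m`
of a solution whose `L²` norm is at most `K`. -/
noncomputable def decayRate (s K : ℝ) : ℝ := fracC s / (2 * K ^ (4 * s))

lemma deriv_time_le_of_isMax_penalized {P : ℝ} (hs₀ : 0 < s) (hs : s < 1 / 2) (hε : 0 ≤ ε)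
    (hK : 0 < K) (hθ : IsClassicalSolution s ε θ {p | 0 < p.2}) (ht : 0 < t) (hB : |θ x t| ≤ B)
    (hL2 : eLpNorm (fun y => θ y t) 2 volume ≤ ENNReal.ofReal K) (hP : 0 ≤ P)
    (hpos : 0 < penalized P (fun y => θ y t) x)
    (hmax : ∀ y, penalized P (fun y => θ y t) y ≤ penalized P (fun y => θ y t) x) :
    deriv (fun r => θ x r) t
      ≤ -(decayRate s K * penalized P (fun y => θ y t) x ^ (1 + 4 * s))
        + P * penaltyCost s ε B := by
  have hcont := (differentiable_penalized (σ := P) (hθ.differentiable ht)).continuous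
  obtain ⟨hint, hintK⟩ :=
    integrable_sq_and_integral_sq_le (hθ.differentiable ht).continuous hK.le hL2
  obtain ⟨hint', hintK'⟩ := integrable_max_zero_sq_and_integral_le hcont
    (fun y => sub_le_self _ (mul_nonneg hP (zero_le_one.trans (one_le_logWeight y)))) hint hintK
  have hlap := mul_rpow_le_fracLap_of_isMax hs₀ (hs.trans (by norm_num)) hK hcont hpos hmax
    (FracIntegrable.penalized (hθ.fracIntegrable ht x) hs₀ hs P) hint' hintK'
  have hloc : IsLocalMax (penalized P fun y => θ y t) x := Eventually.of_forall hmax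
  have hvisc := mul_nonpos_of_nonneg_of_nonpos hε
    (deriv_deriv_nonpos_of_isLocalMax hloc hcont.continuousAt)
  have hres := abs_le.1 (abs_penalized_residual_le hs₀ hs hε hθ ht hB P)
  rw [hloc.deriv_eq_zero, abs_of_nonneg hP] at hres
  unfold decayRate
  linarith [hres.2]

lemma decayRate_pos (hs₀ : 0 < s) (hs : s < 1) (hK : 0 < K) : 0 < decayRate s K :=
  div_pos (fracC_pos hs₀ hs) (by positivity)

lemma le_powerSolution_of_initial_le {t₀ T : ℝ} (hs₀ : 0 < s) (hs : s < 1 / 2) (hε : 0 ≤ ε)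
    (hK : 0 < K) (hθ : IsClassicalSolution s ε θ {p | 0 < p.2})
    (hL2 : ∀ r, 0 < r → eLpNorm (fun y => θ y r) 2 volume ≤ ENNReal.ofReal K) (ht₀ : 0 < t₀)
    (hT : T < t₀) (hinit : ∀ y, θ y t₀ ≤ powerSolution (-4 * s) (decayRate s K) T t₀)
    (ht : t₀ ≤ t) (x : ℝ) : θ x t ≤ powerSolution (-4 * s) (decayRate s K) T t := by
  set g := powerSolution (-4 * s) (decayRate s K) T
  have hp : -4 * s ≠ 0 := by linarith
  have hbase : ∀ r, t₀ ≤ r → 0 < -4 * s * decayRate s K * (T - r) := fun r hr => by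
    linarith [mul_pos (mul_pos hs₀ (decayRate_pos hs₀ (hs.trans (by norm_num)) hK))
      (sub_pos.2 (hT.trans_le hr))]
  have hg₀ : ∀ r, t₀ ≤ r → 0 < g r := fun r hr => powerSolution_pos (hbase r hr)
  have hgderiv : ∀ r, t₀ ≤ r → HasDerivAt g (-(decayRate s K * g r ^ (1 + 4 * s))) r :=
    fun r hr => (hasDerivAt_powerSolution hp (hbase r hr)).congr_deriv (by
      rw [show 1 - -4 * s = 1 + 4 * s by ring])
  obtain ⟨B, hB⟩ := hθ.bounded
  have hA : 0 ≤ penaltyCost s ε B := penaltyCost_nonneg hs₀ (hs.trans (by norm_num)) hε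
    ((abs_nonneg _).trans (hB (x, t₀) ht₀))
  refine sub_nonpos.1 (nonpos_of_penalized_maxima (Φ := fun y r => θ y r - g r)
    (lam := penaltyCost s ε B + 1) (M := B) differentiable_logWeight.continuous
    (fun y => zero_le_one.trans (one_le_logWeight y)) tendsto_logWeight_cocompact ?_ ?_
    (fun y r hr => ?_) (fun y => sub_nonpos.2 (hinit y)) (fun y r hr P hP hPy hmax => ?_) x
    (right_mem_Icc.2 ht))
  · exact add_nonneg hA zero_le_one
  · refine (hθ.cont.mono fun p hp => ht₀.trans_le hp.2.1).sub ?_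
    exact (show ContinuousOn g (Icc t₀ t) from fun r hr =>
      (hgderiv r hr.1).continuousAt.continuousWithinAt).comp continuousOn_snd fun p hp => hp.2
  · linarith [le_abs_self (θ y r), hB (y, r) (ht₀.trans_le hr.1), hg₀ r hr.1]
  have hr₀ : 0 < r := ht₀.trans hr.1
  have hf : g r < penalized P (fun y => θ y r) y := by
    simp only [penalized]
    linarith
  have hdt := deriv_time_le_of_isMax_penalized hs₀ hs hε hK hθ hr₀ (hB (y, r) hr₀) (hL2 r hr₀)
    hP.le ((hg₀ r hr.1.le).trans hf) fun z => by
      simp only [penalized]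
      linarith [hmax z]
  have hpow : decayRate s K * g r ^ (1 + 4 * s)
      ≤ decayRate s K * penalized P (fun y => θ y r) y ^ (1 + 4 * s) := by
    have := hg₀ r hr.1.le
    have := decayRate_pos hs₀ (hs.trans (by norm_num)) hK
    gcongr
  refine ⟨_, (hθ.diff_t (y, r) hr₀).hasDerivAt.sub (hgderiv r hr.1.le), ?_⟩
  have hPΦ : P < θ y r - g r := (le_mul_of_one_le_right hP.le (one_le_logWeight y)).trans_lt hPy
  linarith [mul_le_mul_of_nonneg_right hPΦ.le hA]

/- The comparison function starts above the solution at time `t₀` when `T < t₀` is chosen from the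
a priori bound, and its value at time `t` is bounded independently of `T`. -/
lemma IsClassicalSolution.le_of_decay {t₀ M : ℝ} (hs₀ : 0 < s) (hs : s < 1 / 2) (hε : 0 ≤ ε)
    (hK : 0 < K) (hθ : IsClassicalSolution s ε θ {p | 0 < p.2})
    (hL2 : ∀ r, 0 < r → eLpNorm (fun y => θ y r) 2 volume ≤ ENNReal.ofReal K) (ht₀ : 0 < t₀)
    (hM : 0 < M) (ht : M ^ (-4 * s) ≤ 4 * s * decayRate s K * (t - t₀)) (x : ℝ) : θ x t ≤ M := by
  have hc := decayRate_pos hs₀ (hs.trans (by norm_num)) hK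
  obtain ⟨B₀, hB₀⟩ := hθ.bounded
  set B := max B₀ 1
  have hB : ∀ y, θ y t₀ ≤ B := fun y =>
    (le_abs_self _).trans ((hB₀ (y, t₀) ht₀).trans (le_max_left _ _))
  have hBpos : 0 < B := lt_max_of_lt_right one_pos
  set T := t₀ - B ^ (-4 * s) / (4 * s * decayRate s K) with hT
  have hTt₀ : T < t₀ := sub_lt_self _ (by positivity)
  have hinit : powerSolution (-4 * s) (decayRate s K) T t₀ = B :=
    powerSolution_eq_of_rpow_eq (by linarith) hBpos.le (by
      rw [hT]
      field_simp
      ring)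
  have htt₀ : t₀ ≤ t := by
    by_contra! hlt
    linarith [rpow_pos_of_pos hM (-4 * s), mul_pos (mul_pos hs₀ hc) (sub_pos.2 hlt)]
  refine (le_powerSolution_of_initial_le hs₀ hs hε hK hθ hL2 ht₀ hTt₀
    (fun y => (hB y).trans_eq hinit.symm) htt₀ x).trans
    (powerSolution_le_of_rpow_le (by linarith) hM (ht.trans ?_))
  linarith [mul_pos (mul_pos hs₀ hc) (sub_pos.2 hTt₀)]

lemma IsClassicalSolution.abs_le_of_decay {t₀ M : ℝ} (hs₀ : 0 < s) (hs : s < 1 / 2) (hε : 0 ≤ ε)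
    (hK : 0 < K) (hθ : IsClassicalSolution s ε θ {p | 0 < p.2})
    (hL2 : ∀ r, 0 < r → eLpNorm (fun y => θ y r) 2 volume ≤ ENNReal.ofReal K) (ht₀ : 0 < t₀)
    (hM : 0 < M) (ht : M ^ (-4 * s) ≤ 4 * s * decayRate s K * (t - t₀)) (x : ℝ) :
    |θ x t| ≤ M := by
  have hL2' : ∀ r, 0 < r → eLpNorm (fun y => -θ (-y) r) 2 volume ≤ ENNReal.ofReal K :=
    fun r hr => by
      refine le_trans ?_ (hL2 r hr)
      have hmeas := (hθ.differentiable hr).continuous.aestronglyMeasurable (μ := volume)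
      rw [← eLpNorm_comp_measurePreserving hmeas (Measure.measurePreserving_neg volume)]
      exact (eLpNorm_neg _ 2 volume).le
  refine abs_le'.2 ⟨hθ.le_of_decay hs₀ hs hε hK hL2 ht₀ hM ht x, ?_⟩
  simpa using hθ.reflect.le_of_decay hs₀ hs hε hK hL2' ht₀ hM ht (-x)

end Decay

/-! ### A shrinking Hölder modulus of continuity -/

/-- The modulus of continuity `ξ ↦ ((ξ + r) / L) ^ α`: Hölder on scales above `r`, without any
constraint on the solution when `r = L` and its oscillation is at most `1`. -/
noncomputable def holderModulus (α L r ξ : ℝ) : ℝ := ((ξ + r) / L) ^ α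

section HolderModulus

variable {α L r ξ : ℝ}

lemma holderModulus_pos (hL : 0 < L) (hξ : 0 ≤ ξ) (hr : 0 < r) : 0 < holderModulus α L r ξ :=
  rpow_pos_of_pos (by positivity) α

lemma concaveOn_holderModulus (hα₀ : 0 ≤ α) (hα₁ : α ≤ 1) (hL : 0 ≤ L) (hr : 0 ≤ r) :
    ConcaveOn ℝ (Ici 0) (holderModulus α L r) := by
  have hcomp := ((concaveOn_rpow hα₀ hα₁).translate_left r).smul (inv_nonneg.2 (rpow_nonneg hL α))
  refine (hcomp.subset (fun ξ hξ => ?_) (convex_Ici 0)).congr fun ξ hξ => ?_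
  · exact add_nonneg hr hξ
  · exact ((div_rpow (add_nonneg hξ hr) hL α).trans (div_eq_inv_mul _ _)).symm

lemma mul_holderModulus_le_two_mul_sub (hα : 0 ≤ α) (hL : 0 ≤ L) (hξ : 0 ≤ ξ) (hr : 0 ≤ r) :
    (2 - 2 ^ α) * holderModulus α L r ξ
      ≤ 2 * holderModulus α L r ξ - holderModulus α L r (2 * ξ) := by
  have hdouble : holderModulus α L r (2 * ξ) ≤ 2 ^ α * holderModulus α L r ξ := by
    unfold holderModulus
    rw [← mul_rpow two_pos.le (by positivity), ← mul_div_assoc]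
    gcongr
    linarith
  linarith

lemma hasDerivAt_div_rpow {z : ℝ} (hL : L ≠ 0) (hz : z ≠ 0) :
    HasDerivAt (fun z => (z / L) ^ α) (α * (z / L) ^ α / z) z := by
  refine (((hasDerivAt_id z).div_const L).rpow_const (Or.inl (div_ne_zero hz hL))).congr_deriv ?_
  rw [id, rpow_sub_one (div_ne_zero hz hL)]
  field_simp

lemma hasDerivAt_holderModulus_abs {d : ℝ} (hL : L ≠ 0) (hr : 0 ≤ r) (hd : d ≠ 0) :
    HasDerivAt (fun d => holderModulus α L r |d|)
      (α * holderModulus α L r |d| / (|d| + r) * SignType.sign d) d :=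
  (hasDerivAt_div_rpow hL (by positivity)).comp d ((hasDerivAt_abs hd).add_const r)

/- Since `κ * L ^ (1 - 2 * s) = 1` and `1 - 2 * s ≤ α`, the modulus is at most
`κ * (ξ + r) ^ (1 - 2 * s)` wherever it is at most `1`. -/
lemma holderModulus_drift_le_dissipation {κ s : ℝ} (hα : 0 < α) (hs₀ : 0 ≤ s) (hs : s ≤ 1 / 2)
    (hsα : 1 - 2 * s ≤ α) (hL : 0 < L) (hκ : 0 ≤ κ) (hκL : κ * L ^ (1 - 2 * s) = 1) (hr : 0 < r)
    (hξ : 0 < ξ) (hle : holderModulus α L r ξ ≤ 1) :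
    α * holderModulus α L r ξ / (ξ + r) * (holderModulus α L r ξ + κ * r ^ (1 - 2 * s))
      ≤ 2 * α * κ * holderModulus α L r ξ / ξ ^ (2 * s) := by
  have hω := holderModulus_pos (α := α) hL hξ.le hr
  have hρ : 0 < ξ + r := by positivity
  have hq : (ξ + r) / L ≤ 1 := by
    by_contra! hgt
    exact hle.not_gt (one_lt_rpow hgt hα)
  have hmod : holderModulus α L r ξ ≤ κ * (ξ + r) ^ (1 - 2 * s) := calc
    holderModulus α L r ξ ≤ ((ξ + r) / L) ^ (1 - 2 * s) :=
      rpow_le_rpow_of_exponent_ge (by positivity) hq hsα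
    _ = κ * (ξ + r) ^ (1 - 2 * s) := by
      rw [div_rpow hρ.le hL.le, div_eq_iff (by positivity), mul_right_comm, hκL, one_mul]
  have hshift : r ^ (1 - 2 * s) ≤ (ξ + r) ^ (1 - 2 * s) := by
    have : 0 ≤ 1 - 2 * s := by linarith
    gcongr
    linarith
  calc α * holderModulus α L r ξ / (ξ + r) * (holderModulus α L r ξ + κ * r ^ (1 - 2 * s))
      ≤ α * holderModulus α L r ξ / (ξ + r) * (2 * κ * (ξ + r) ^ (1 - 2 * s)) := by
        gcongr
        linarith [mul_le_mul_of_nonneg_left hshift hκ]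
    _ = 2 * α * κ * holderModulus α L r ξ / (ξ + r) ^ (2 * s) := by
        rw [rpow_sub hρ, rpow_one]
        field_simp
    _ ≤ 2 * α * κ * holderModulus α L r ξ / ξ ^ (2 * s) := by
        gcongr
        linarith

end HolderModulus

section Modulus

variable {s ε α B t : ℝ} {θ : ℝ → ℝ → ℝ}

lemma deriv_time_sub_le_of_isMax_penalized {P W x y : ℝ} {ω : ℝ → ℝ} (hs₀ : 0 < s) (hs : s < 1 / 2)
    (hε : 0 ≤ ε) (hθ : IsClassicalSolution s ε θ {p | 0 < p.2}) (ht : 0 < t)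
    (hB : ∀ x, |θ x t| ≤ B) (hP : 0 ≤ P) (hω : ConcaveOn ℝ (Ici 0) ω) (hxy : x ≠ y)
    (hW : HasDerivAt (fun d => ω |d|) W (x - y))
    (hpos : 0 ≤ penalized P (fun z => θ z t) x - penalized (-P) (fun z => θ z t) y - ω |x - y|)
    (hmax : ∀ a b, penalized P (fun z => θ z t) a - penalized (-P) (fun z => θ z t) b - ω |a - b|
      ≤ penalized P (fun z => θ z t) x - penalized (-P) (fun z => θ z t) y - ω |x - y|) :
    deriv (fun r => θ x r) t - deriv (fun r => θ y r) t ≤ -((θ x t - θ y t) * W)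
      - fracC s * ((2 * ω |x - y| - ω (2 * |x - y|)) / |x - y| ^ (2 * s))
      + 2 * P * penaltyCost s ε B := by
  have hdiff := hθ.differentiable ht
  have hdiff' := hθ.differentiable_deriv ht
  have hf := differentiable_penalized (σ := P) hdiff
  have hg := differentiable_penalized (σ := -P) hdiff
  obtain ⟨hfx, hgy⟩ := deriv_eq_of_isMax_sub_sub (hf x) (hg y) hW hmax
  have hvisc := mul_le_mul_of_nonneg_left (deriv_deriv_le_of_isMax_sub_sub (Ω := fun d => ω |d|)
    hf hg (differentiable_deriv_penalized hdiff hdiff')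
    (differentiable_deriv_penalized hdiff hdiff') hmax) hε
  have hlap := le_fracLap_sub_of_isMax_sub_sub hs₀ (hs.trans (by norm_num)) hf.continuous
    hg.continuous (fun z => by
      have := mul_nonneg hP (zero_le_one.trans (one_le_logWeight z))
      simp only [penalized]
      linarith) hω hxy hpos hmax ((hθ.fracIntegrable ht x).penalized hs₀ hs P)
    ((hθ.fracIntegrable ht y).penalized hs₀ hs (-P))
  have hresx := abs_le.1 (abs_penalized_residual_le hs₀ hs hε hθ ht (hB x) P)
  have hresy := abs_le.1 (abs_penalized_residual_le hs₀ hs hε hθ ht (hB y) (-P))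
  rw [hfx, abs_of_nonneg hP] at hresx
  rw [hgy, abs_neg, abs_of_nonneg hP] at hresy
  linarith [hresx.2, hresy.1]

lemma tendsto_logWeight_add_logWeight_cocompact :
    Tendsto (fun p : ℝ × ℝ => logWeight p.1 + logWeight p.2) (cocompact (ℝ × ℝ)) atTop := by
  rw [← coprod_cocompact, Filter.coprod]
  refine tendsto_sup.2 ⟨?_, ?_⟩
  · exact tendsto_atTop_mono
      (fun p => le_add_of_nonneg_right (zero_le_one.trans (one_le_logWeight p.2)))
      (tendsto_logWeight_cocompact.comp tendsto_comap)
  · exact tendsto_atTop_mono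
      (fun p => le_add_of_nonneg_left (zero_le_one.trans (one_le_logWeight p.1)))
      (tendsto_logWeight_cocompact.comp tendsto_comap)

/-- The constant `κ` in the evolution `r' = -κ * r ^ (1 - 2 * s)` of the parameter `r` of
`holderModulus`; the dissipation at separation `ξ` is at least `2 * α * κ * ω(ξ) / ξ ^ (2 * s)`. -/
noncomputable def modulusRate (s α : ℝ) : ℝ := fracC s * (2 - 2 ^ α) / (2 * α)

lemma modulusRate_pos (hs₀ : 0 < s) (hs : s < 1) (hα₀ : 0 < α) (hα₁ : α < 1) :
    0 < modulusRate s α := by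
  have hpow : (2 : ℝ) ^ α < 2 := by
    simpa using rpow_lt_rpow_of_exponent_lt (one_lt_two (α := ℝ)) hα₁
  exact div_pos (mul_pos (fracC_pos hs₀ hs) (sub_pos.2 hpow)) (by positivity)

lemma modulusRate_mul_holderModulus_le_dissipation {L r ξ : ℝ} (hs₀ : 0 < s) (hs : s < 1)
    (hα : 0 < α) (hL : 0 ≤ L) (hξ : 0 ≤ ξ) (hr : 0 ≤ r) :
    2 * α * modulusRate s α * holderModulus α L r ξ / ξ ^ (2 * s) ≤ fracC s *
      ((2 * holderModulus α L r ξ - holderModulus α L r (2 * ξ)) / ξ ^ (2 * s)) := by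
  have hC := fracC_pos hs₀ hs
  rw [modulusRate, mul_div_cancel₀ _ (show 2 * α ≠ 0 by positivity), mul_assoc, mul_div_assoc]
  gcongr
  exact mul_holderModulus_le_two_mul_sub hα.le hL hξ hr

lemma deriv_time_sub_add_drift_le {L P x y r : ℝ} (hs₀ : 0 < s) (hs : s < 1 / 2) (hα₀ : 0 < α)
    (hα₁ : α < 1) (hsα : 1 - 2 * s ≤ α) (hε : 0 ≤ ε)
    (hθ : IsClassicalSolution s ε θ {p | 0 < p.2}) (ht : 0 < t) (hB : ∀ x, |θ x t| ≤ B)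
    (hL : 0 < L) (hκL : modulusRate s α * L ^ (1 - 2 * s) = 1) (hr : 0 < r) (hP : 0 ≤ P)
    (hxy : x ≠ y) (hω₁ : holderModulus α L r |x - y| ≤ 1)
    (hpos : P * (logWeight x + logWeight y) ≤ θ x t - θ y t - holderModulus α L r |x - y|)
    (hmax : ∀ a b, θ a t - θ b t - holderModulus α L r |a - b| - P * (logWeight a + logWeight b)
      ≤ θ x t - θ y t - holderModulus α L r |x - y| - P * (logWeight x + logWeight y)) :
    deriv (fun r => θ x r) t - deriv (fun r => θ y r) t
        + α * holderModulus α L r |x - y| / (|x - y| + r) * (modulusRate s α * r ^ (1 - 2 * s))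
      ≤ α * holderModulus α L r |x - y| / (|x - y| + r)
          * (θ x t - θ y t - holderModulus α L r |x - y|) + 2 * P * penaltyCost s ε B := by
  have hξ : 0 < |x - y| := abs_pos.2 (sub_ne_zero.2 hxy)
  set ω := holderModulus α L r
  set W := α * ω |x - y| / (|x - y| + r)
  have hω : 0 < ω |x - y| := holderModulus_pos hL hξ.le hr
  have hpen : ∀ a b, penalized P (fun z => θ z t) a - penalized (-P) (fun z => θ z t) b - ω |a - b|
      = θ a t - θ b t - ω |a - b| - P * (logWeight a + logWeight b) := fun a b => by
    simp only [penalized]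
    ring
  have hequation := deriv_time_sub_le_of_isMax_penalized hs₀ hs hε hθ ht hB hP
    (concaveOn_holderModulus hα₀.le hα₁.le hL.le hr.le) hxy
    (hasDerivAt_holderModulus_abs hL.ne' hr.le (sub_ne_zero.2 hxy))
    (by rw [hpen]; linarith) (fun a b => by rw [hpen, hpen]; exact hmax a b)
  have hdrift : -((θ x t - θ y t) * (W * SignType.sign (x - y))) ≤ (θ x t - θ y t) * W := by
    have hsign : -(SignType.sign (x - y) : ℝ) ≤ 1 := by
      rcases lt_or_gt_of_ne (sub_ne_zero.2 hxy) with h | h <;> simp [h]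
    have hdiff : 0 ≤ θ x t - θ y t := by
      have := mul_nonneg hP (add_nonneg (zero_le_one.trans (one_le_logWeight x))
        (zero_le_one.trans (one_le_logWeight y)))
      linarith
    have := mul_le_mul_of_nonneg_left hsign (mul_nonneg hdiff (show 0 ≤ W by positivity))
    linarith
  have hdissipation := modulusRate_mul_holderModulus_le_dissipation hs₀ (hs.trans (by norm_num))
    hα₀ hL.le hξ.le hr.le
  have hbalance := holderModulus_drift_le_dissipation hα₀ hs₀.le hs.le hsα hL
    (modulusRate_pos hs₀ (hs.trans (by norm_num)) hα₀ hα₁).le hκL hr hξ hω₁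
  linarith

/- The pair `(x, y)` is off the diagonal and the modulus is below `1` because the difference
`θ x t - θ y t` exceeds the modulus. -/
lemma deriv_time_sub_add_drift_le_mul {L P x y r : ℝ} (hs₀ : 0 < s) (hs : s < 1 / 2)
    (hα₀ : 0 < α) (hα₁ : α < 1) (hsα : 1 - 2 * s ≤ α) (hε : 0 ≤ ε)
    (hθ : IsClassicalSolution s ε θ {p | 0 < p.2}) (ht : 0 < t) (hB : ∀ x, |θ x t| ≤ 1 / 2)
    (hL : 0 < L) (hκL : modulusRate s α * L ^ (1 - 2 * s) = 1) (hr : 0 < r) (hP : 0 ≤ P)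
    (hpos : P * (logWeight x + logWeight y) < θ x t - θ y t - holderModulus α L r |x - y|)
    (hmax : ∀ a b, θ a t - θ b t - holderModulus α L r |a - b| - P * (logWeight a + logWeight b)
      ≤ θ x t - θ y t - holderModulus α L r |x - y| - P * (logWeight x + logWeight y)) :
    deriv (fun r => θ x r) t - deriv (fun r => θ y r) t
        + α * holderModulus α L r |x - y| / (|x - y| + r) * (modulusRate s α * r ^ (1 - 2 * s))
      ≤ (α / r + penaltyCost s ε (1 / 2)) * (θ x t - θ y t - holderModulus α L r |x - y|) := by
  have hPΦ : 2 * P < θ x t - θ y t - holderModulus α L r |x - y| := by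
    have := mul_le_mul_of_nonneg_left (add_le_add (one_le_logWeight x) (one_le_logWeight y)) hP
    linarith
  have hω := holderModulus_pos (α := α) hL (abs_nonneg (x - y)) hr
  have hxy : x ≠ y := by
    rintro rfl
    linarith
  have hω₁ : holderModulus α L r |x - y| ≤ 1 := by
    linarith [(abs_le.1 (hB x)).2, (abs_le.1 (hB y)).1]
  have hslope : α * holderModulus α L r |x - y| / (|x - y| + r) ≤ α / r :=
    div_le_div₀ hα₀.le (mul_le_of_le_one_right hα₀.le hω₁) hr (by linarith [abs_nonneg (x - y)])
  have hcost := penaltyCost_nonneg hs₀ (hs.trans (by norm_num)) hε (one_half_pos (α := ℝ)).le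
  refine (deriv_time_sub_add_drift_le hs₀ hs hα₀ hα₁ hsα hε hθ ht hB hL hκL hr hP hxy hω₁ hpos.le
    hmax).trans ?_
  rw [add_mul, mul_comm (penaltyCost _ _ _)]
  exact add_le_add (mul_le_mul_of_nonneg_right hslope (by linarith))
    (mul_le_mul_of_nonneg_right hPΦ.le hcost)

lemma hasDerivAt_holderModulus_powerSolution {L T ξ p c : ℝ} (hL : L ≠ 0) (hξ : 0 ≤ ξ)
    (hp : p ≠ 0) (h : 0 < p * c * (T - t)) :
    HasDerivAt (fun τ => holderModulus α L (powerSolution p c T τ) ξ)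
      (-(α * holderModulus α L (powerSolution p c T t) ξ / (ξ + powerSolution p c T t)
        * (c * powerSolution p c T t ^ (1 - p)))) t := by
  have hr := powerSolution_pos h
  exact ((hasDerivAt_div_rpow hL (by positivity)).comp t
    ((hasDerivAt_powerSolution hp h).const_add ξ)).congr_deriv (mul_neg _ _)

lemma continuous_holderModulus_powerSolution {p : ℝ} (hα : 0 ≤ α) (hp : 0 < p) (L c T : ℝ) :
    Continuous fun q : (ℝ × ℝ) × ℝ =>
      holderModulus α L (powerSolution p c T q.2) |q.1.1 - q.1.2| := by
  have := continuous_powerSolution hp c T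
  exact Continuous.rpow_const (by fun_prop) fun _ => Or.inr hα

lemma IsClassicalSolution.hasDerivAt_time (hθ : IsClassicalSolution s ε θ {p | 0 < p.2})
    (ht : 0 < t) (x : ℝ) : HasDerivAt (θ x) (deriv (θ x) t) t :=
  (hθ.diff_t (x, t) ht).hasDerivAt

lemma IsClassicalSolution.continuousOn_oscillation {t₀ t₁ : ℝ}
    (hθ : IsClassicalSolution s ε θ {p | 0 < p.2}) (ht₀ : 0 < t₀) :
    ContinuousOn (fun q : (ℝ × ℝ) × ℝ => θ q.1.1 q.2 - θ q.1.2 q.2) (univ ×ˢ Icc t₀ t₁) :=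
  (hθ.cont.comp (f := fun q : (ℝ × ℝ) × ℝ => (q.1.1, q.2)) (by fun_prop)
    fun _ hq => ht₀.trans_le hq.2.1).sub
  (hθ.cont.comp (f := fun q : (ℝ × ℝ) × ℝ => (q.1.2, q.2)) (by fun_prop)
    fun _ hq => ht₀.trans_le hq.2.1)

lemma exists_hasDerivAt_sub_holderModulus_le {L T P x y : ℝ} (hs₀ : 0 < s) (hs : s < 1 / 2)
    (hα₀ : 0 < α) (hα₁ : α < 1) (hsα : 1 - 2 * s ≤ α) (hε : 0 ≤ ε)
    (hθ : IsClassicalSolution s ε θ {p | 0 < p.2}) (ht : 0 < t) (hB : ∀ x, |θ x t| ≤ 1 / 2)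
    (hL : 0 < L) (hκL : modulusRate s α * L ^ (1 - 2 * s) = 1) (htT : t < T) {r : ℝ → ℝ}
    (hr : r = powerSolution (2 * s) (modulusRate s α) T) (hP : 0 ≤ P)
    (hpos : P * (logWeight x + logWeight y) < θ x t - θ y t - holderModulus α L (r t) |x - y|)
    (hmax : ∀ a b, θ a t - θ b t - holderModulus α L (r t) |a - b| - P * (logWeight a + logWeight b)
      ≤ θ x t - θ y t - holderModulus α L (r t) |x - y| - P * (logWeight x + logWeight y)) :
    ∃ d, HasDerivAt (fun τ => θ x τ - θ y τ - holderModulus α L (r τ) |x - y|) d t ∧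
      d ≤ (α / r t + penaltyCost s ε (1 / 2))
        * (θ x t - θ y t - holderModulus α L (r t) |x - y|) := by
  subst hr
  have hκ := modulusRate_pos hs₀ (hs.trans (by norm_num)) hα₀ hα₁
  have hbase : 0 < 2 * s * modulusRate s α * (T - t) :=
    mul_pos (by positivity) (sub_pos.2 htT)
  refine ⟨_, ((hθ.hasDerivAt_time ht x).sub (hθ.hasDerivAt_time ht y)).sub
    (hasDerivAt_holderModulus_powerSolution hL.ne' (abs_nonneg _) (by positivity) hbase), ?_⟩
  rw [sub_neg_eq_add]
  exact deriv_time_sub_add_drift_le_mul hs₀ hs hα₀ hα₁ hsα hε hθ ht hB hL hκL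
    (powerSolution_pos hbase) hP hpos hmax

lemma sub_le_holderModulus_of_lt {L T t₀ : ℝ} (hs₀ : 0 < s) (hs : s < 1 / 2)
    (hα₀ : 0 < α) (hα₁ : α < 1) (hsα : 1 - 2 * s ≤ α) (hε : 0 ≤ ε)
    (hθ : IsClassicalSolution s ε θ {p | 0 < p.2}) (ht₀ : 0 < t₀)
    (hB : ∀ t, t₀ ≤ t → ∀ x, |θ x t| ≤ 1 / 2) (hL : 0 < L)
    (hκL : modulusRate s α * L ^ (1 - 2 * s) = 1)
    (hT : L ^ (2 * s) = 2 * s * modulusRate s α * (T - t₀)) (ht₀t : t₀ ≤ t) (htT : t < T)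
    (x y : ℝ) :
    θ x t - θ y t ≤ holderModulus α L (powerSolution (2 * s) (modulusRate s α) T t) |x - y| := by
  have hκ := modulusRate_pos hs₀ (hs.trans (by norm_num)) hα₀ hα₁
  set r := powerSolution (2 * s) (modulusRate s α) T
  have hr : ∀ τ ≤ t, 0 < r τ := fun τ hτ =>
    powerSolution_pos (mul_pos (by positivity) (sub_pos.2 (hτ.trans_lt htT)))
  have hosc : ∀ τ, t₀ ≤ τ → ∀ p : ℝ × ℝ, θ p.1 τ - θ p.2 τ ≤ 1 := fun τ hτ p => by
    linarith [(abs_le.1 (hB τ hτ p.1)).2, (abs_le.1 (hB τ hτ p.2)).1]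
  refine sub_nonpos.1 (nonpos_of_penalized_maxima
    (Φ := fun p τ => θ p.1 τ - θ p.2 τ - holderModulus α L (r τ) |p.1 - p.2|)
    (ψ := fun p : ℝ × ℝ => logWeight p.1 + logWeight p.2)
    (lam := α / r t + penaltyCost s ε (1 / 2) + 1) (M := 1) (a := t₀) (b := t)
    (by have := differentiable_logWeight.continuous; fun_prop)
    (fun p => add_nonneg (zero_le_one.trans (one_le_logWeight p.1))
      (zero_le_one.trans (one_le_logWeight p.2))) tendsto_logWeight_add_logWeight_cocompact ?_
    ((hθ.continuousOn_oscillation ht₀).sub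
      (continuous_holderModulus_powerSolution hα₀.le (by positivity) _ _ _).continuousOn)
    (fun p τ hτ => ?_) (fun p => ?_) (fun p τ hτ P hP hPp hmax => ?_) (x, y)
    (right_mem_Icc.2 ht₀t))
  · have := hr t le_rfl
    have := penaltyCost_nonneg hs₀ (hs.trans (by norm_num)) hε (one_half_pos (α := ℝ)).le
    positivity
  · linarith [hosc τ hτ.1 p, holderModulus_pos (α := α) hL (abs_nonneg (p.1 - p.2)) (hr τ hτ.2)]
  · have hinit : 1 ≤ holderModulus α L (r t₀) |p.1 - p.2| := by
      rw [show r t₀ = L from powerSolution_eq_of_rpow_eq (by positivity) hL.le hT]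
      exact one_le_rpow ((one_le_div hL).2 (by linarith [abs_nonneg (p.1 - p.2)])) hα₀.le
    linarith [hosc t₀ le_rfl p]
  · have hΦ : 0 < θ p.1 τ - θ p.2 τ - holderModulus α L (r τ) |p.1 - p.2| :=
      (mul_nonneg hP.le (add_nonneg (zero_le_one.trans (one_le_logWeight p.1))
        (zero_le_one.trans (one_le_logWeight p.2)))).trans_lt hPp
    have hrate : α / r τ ≤ α / r t :=
      div_le_div_of_nonneg_left hα₀.le (hr t le_rfl)
        (powerSolution_le_powerSolution (by positivity) hκ.le hτ.2 htT.le)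
    obtain ⟨d, hd, hgrowth⟩ := exists_hasDerivAt_sub_holderModulus_le hs₀ hs hα₀ hα₁ hsα hε hθ
      (ht₀.trans hτ.1) (hB τ hτ.1.le) hL hκL (hτ.2.trans_lt htT) rfl hP.le hPp
      fun a b => hmax (a, b)
    exact ⟨d, hd, hgrowth.trans_lt (mul_lt_mul_of_pos_right (by linarith) hΦ)⟩

lemma sub_le_div_rpow_at_extinction {L T t₀ : ℝ} (hs₀ : 0 < s) (hs : s < 1 / 2)
    (hα₀ : 0 < α) (hα₁ : α < 1) (hsα : 1 - 2 * s ≤ α) (hε : 0 ≤ ε)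
    (hθ : IsClassicalSolution s ε θ {p | 0 < p.2}) (ht₀ : 0 < t₀)
    (hB : ∀ t, t₀ ≤ t → ∀ x, |θ x t| ≤ 1 / 2) (hL : 0 < L)
    (hκL : modulusRate s α * L ^ (1 - 2 * s) = 1)
    (hT : L ^ (2 * s) = 2 * s * modulusRate s α * (T - t₀)) (ht₀T : t₀ < T) (x y : ℝ) :
    θ x T - θ y T ≤ (|x - y| / L) ^ α := by
  have hT₀ : 0 < T := ht₀.trans ht₀T
  have hr : powerSolution (2 * s) (modulusRate s α) T T = 0 :=
    powerSolution_eq_of_rpow_eq (by positivity) le_rfl (by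
      rw [sub_self, mul_zero, zero_rpow (by positivity)])
  have hω : Tendsto
      (fun t => holderModulus α L (powerSolution (2 * s) (modulusRate s α) T t) |x - y|)
      (nhdsWithin T (Iio T)) (nhds ((|x - y| / L) ^ α)) := by
    have hcont := (continuous_holderModulus_powerSolution hα₀.le (mul_pos two_pos hs₀) L
      (modulusRate s α) T).comp (.prodMk_right (x, y))
    have := hcont.continuousWithinAt (s := Iio T) (x := T)
    simpa only [ContinuousWithinAt, Function.comp_def, hr, holderModulus, add_zero] using this
  refine le_of_tendsto_of_tendsto ((hθ.hasDerivAt_time hT₀ x).sub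
    (hθ.hasDerivAt_time hT₀ y)).continuousAt.continuousWithinAt hω ?_
  filter_upwards [Ioo_mem_nhdsLT ht₀T] with t ht
  exact sub_le_holderModulus_of_lt hs₀ hs hα₀ hα₁ hsα hε hθ ht₀ hB hL hκL hT ht.1.le ht.2 x y

end Modulus

/-! ### Eventual regularity -/

/- Near `x` the integrand is comparable to `|x - y| ^ (1 - p)` if the slope at `x` is nonzero. -/
lemma deriv_eq_zero_of_integrable {u : ℝ → ℝ} {p x : ℝ} (hp : 2 ≤ p) (hu : DifferentiableAt ℝ u x)
    (hint : Integrable fun y => (u x - u y) / |x - y| ^ p) : deriv u x = 0 := by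
  by_contra hne
  refine not_intervalIntegrable_of_sub_inv_isBigO_punctured (f := fun y =>
    (u x - u y) / |x - y| ^ p) (a := x) (b := x + 1) (c := x) ?_ (by simp)
    left_mem_uIcc hint.intervalIntegrable
  have hslope := (hasDerivAt_iff_tendsto_slope.1 hu.hasDerivAt).norm
  have hpos : 0 < ‖deriv u x‖ := norm_pos_iff.2 hne
  refine Asymptotics.IsBigO.of_bound (2 / ‖deriv u x‖) ?_
  filter_upwards [hslope.eventually (lt_mem_nhds (half_lt_self hpos)), self_mem_nhdsWithin,
    nhdsWithin_le_nhds (Metric.ball_mem_nhds x one_pos)] with y hy hyx hball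
  have hξ : 0 < |x - y| := abs_pos.2 (sub_ne_zero.2 (Ne.symm hyx))
  have hξ₁ : |x - y| ≤ 1 := by
    rw [abs_sub_comm]
    exact (Metric.mem_ball.1 hball).le
  have hpow : |x - y| ^ p ≤ |x - y| ^ 2 := by
    simpa using rpow_le_rpow_of_exponent_ge hξ hξ₁ hp
  calc ‖(y - x)⁻¹‖ = 2 / ‖deriv u x‖ * (‖deriv u x‖ / 2 * |x - y| / |x - y| ^ 2) := by
        rw [norm_inv, norm_eq_abs, abs_sub_comm]
        field_simp
    _ ≤ 2 / ‖deriv u x‖ * (‖slope u x y‖ * |x - y| / |x - y| ^ p) := by gcongr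
    _ = 2 / ‖deriv u x‖ * ‖(u x - u y) / |x - y| ^ p‖ := by
        rw [slope_def_field, norm_div, norm_div, norm_eq_abs (y - x), abs_sub_comm y x,
          div_mul_cancel₀ _ hξ.ne', norm_sub_rev, norm_of_nonneg (rpow_nonneg hξ.le p)]

lemma IsClassicalSolution.eq_of_half_le {s ε t : ℝ} {θ : ℝ → ℝ → ℝ} (hs : 1 / 2 ≤ s)
    (hθ : IsClassicalSolution s ε θ {p | 0 < p.2}) (ht : 0 < t) (x y : ℝ) :
    θ x t = θ y t :=
  is_const_of_deriv_eq_zero (hθ.differentiable ht) (fun z =>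
    deriv_eq_zero_of_integrable (by linarith) (hθ.differentiable ht z)
      (hθ.integrable (z, t) ht)) x y

lemma exists_holder_of_lt_half {α K s : ℝ} (hα₀ : 0 < α) (hα₁ : α < 1) (hK : 0 < K)
    (hsα : (1 - α) / 2 ≤ s) (hs : s < 1 / 2) :
    ∃ T C : ℝ, 0 < T ∧ 0 < C ∧ ∀ ε, 0 ≤ ε → ∀ θ : ℝ → ℝ → ℝ,
      IsClassicalSolution s ε θ {p : ℝ × ℝ | 0 < p.2} →
      (∀ t, 0 < t → eLpNorm (fun x => θ x t) 2 volume ≤ ENNReal.ofReal K) →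
      ∀ t, T < t → ∀ x y, θ x t - θ y t ≤ C * |x - y| ^ α := by
  have hs₀ : 0 < s := by linarith
  have hs₁ : s < 1 := by linarith
  have hκ := modulusRate_pos hs₀ hs₁ hα₀ hα₁
  have hdecay := decayRate_pos hs₀ hs₁ hK
  set κ := modulusRate s α
  set L := κ ^ (-(1 - 2 * s)⁻¹)
  have hL : 0 < L := by positivity
  have hκL : κ * L ^ (1 - 2 * s) = 1 := by
    rw [← rpow_mul hκ.le, neg_mul, inv_mul_cancel₀ (by linarith), rpow_neg_one,
      mul_inv_cancel₀ hκ.ne']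
  set life := L ^ (2 * s) / (2 * s * κ)
  set wait := (1 / 2 : ℝ) ^ (-4 * s) / (4 * s * decayRate s K)
  have hlife : 0 < life := by positivity
  have hwait : 0 < wait := by positivity
  refine ⟨1 + wait + life, L⁻¹ ^ α, by positivity, by positivity,
    fun ε hε θ hθ hL2 t ht x y => ?_⟩
  have hhalf : ∀ τ, t - life ≤ τ → ∀ x, |θ x τ| ≤ 1 / 2 := fun τ hτ x =>
    hθ.abs_le_of_decay hs₀ hs hε hK hL2 one_pos one_half_pos
      ((div_le_iff₀' (by positivity)).1 (show wait ≤ τ - 1 by linarith)) x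
  refine (sub_le_div_rpow_at_extinction hs₀ hs hα₀ hα₁ (by linarith) hε hθ (by linarith) hhalf hL
    hκL ?_ (sub_lt_self t hlife) x y).trans_eq ?_
  · rw [sub_sub_cancel, mul_div_cancel₀ _ (by positivity)]
  · rw [div_eq_inv_mul, mul_rpow (by positivity) (abs_nonneg _)]

theorem eventual_holder_regularity_general {α K s : ℝ} (hα₀ : 0 < α) (hα₁ : α < 1) (hK : 0 < K)
    (hsα : (1 - α) / 2 ≤ s) :
    ∃ T C : ℝ, 0 < T ∧ 0 < C ∧ ∀ ε, 0 ≤ ε → ∀ θ : ℝ → ℝ → ℝ,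
      IsClassicalSolution s ε θ {p : ℝ × ℝ | 0 < p.2} →
      (∀ t, 0 < t → eLpNorm (fun x => θ x t) 2 volume ≤ ENNReal.ofReal K) →
      ∀ t, T < t → ∀ x y, |θ x t - θ y t| ≤ C * |x - y| ^ α := by
  rcases lt_or_ge s (1 / 2) with hs | hs
  · obtain ⟨T, C, hT, hC, hHolder⟩ := exists_holder_of_lt_half hα₀ hα₁ hK hsα hs
    refine ⟨T, C, hT, hC, fun ε hε θ hθ hL2 t ht x y => abs_sub_le_iff.2
      ⟨hHolder ε hε θ hθ hL2 t ht x y, ?_⟩⟩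
    rw [abs_sub_comm x y]
    exact hHolder ε hε θ hθ hL2 t ht y x
  · refine ⟨1, 1, one_pos, one_pos, fun ε _ θ hθ _ t ht x y => ?_⟩
    rw [hθ.eq_of_half_le hs (one_pos.trans ht) x y, sub_self, abs_zero]
    positivity

/-- eventual Hölder regularity, uniform in the viscosity, for solutions of the
regularized slightly supercritical fractional Burgers equation with bounded `L²` norm. -/
theorem eventual_holder_regularity :
    ∃ α : ℝ, 0 < α ∧ α < 1 / 2 ∧
      ∀ K : ℝ, 0 < K → ∀ s : ℝ, (1 - α) / 2 < s → s ≤ 1 / 2 →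
        ∃ Tstar C c : ℝ, 0 < Tstar ∧ 0 < C ∧ 0 < c ∧
          ∀ ε₁ : ℝ, 0 < ε₁ → ε₁ ≤ 1 →
            ∀ θ : ℝ → ℝ → ℝ,
              IsClassicalSolution s ε₁ θ {p : ℝ × ℝ | 0 < p.2} →
              (∀ t : ℝ, 0 < t →
                eLpNorm (fun x => θ x t) 2 volume ≤ ENNReal.ofReal K) →
              (∀ t : ℝ, 0 < t →
                Tendsto (fun x => θ x t) (cocompact ℝ) (nhds 0)) →
              ∀ t : ℝ, Tstar < t → ∀ x y : ℝ,
                c * ε₁ ^ (2 - 2 * s) < |x - y| →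
                |θ x t - θ y t| ≤ C * |x - y| ^ α := by
  refine ⟨1 / 4, by norm_num, by norm_num, fun K hK s hsα _ => ?_⟩
  obtain ⟨T, C, hT, hC, hHolder⟩ :=
    eventual_holder_regularity_general (by norm_num) (by norm_num) hK hsα.le
  exact ⟨T, C, 1, hT, hC, one_pos, fun ε hε _ θ hθ hL2 _ t ht x y _ =>
    hHolder ε hε.le θ hθ hL2 t ht x y⟩
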